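/- arXiv:2206.14224 — 4 statements merged into one kernel-verified Lean document; each statement's English description precedes it below -/
import Mathlib

section
/- For every m, M ∈ ℕ there exists M' ∈ ℕ with M' ≥ m and M' ≥ M such that the following holds: for every map e : Q(M') → Q(M') there exists s ∈ Q^m(M') such that for all t ∈ Q(M') with t ≤ s, either e(t) ≤ t or e(t) ≰ s. -/
/-- The coarsening order on partitions (equivalence relations) of `{0,…,n−1}`:
`QLe s t` (written `s ≤ t` in the paper) iff every `s`-class is a union of `t`-classes. -/
def QLe {n : ℕ} (s t : Setoid (Fin n)) : Prop := ∀ i j : Fin n, t i j → s i j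

/-- `Q^m(n)`: the partitions of `{0,…,n−1}` in which `0, 1, …, m−1` belong to
pairwise distinct classes. -/
def Qm {n : ℕ} (m : ℕ) (s : Setoid (Fin n)) : Prop :=
  ∀ i j : Fin n, (i : ℕ) < (j : ℕ) → (j : ℕ) < m → ¬ s i j

/-!
Partitions with `m` classes separating `0, …, m-1` are kernels of words `w : X → α`, where the `m`
letters sit inside `X` via a section `i` of `w`. If such a word fails, the failure is witnessed by
a partition `P` of the letters and two `P`-equivalent letters `a`, `b` whose copies are not
identified by `e` of the pullback of `P`. For fixed `P, a, b`, a failing word can be recovered after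
replacing every letter `b` by `a`: this replacement does not change the pullback of `P`, and two
failing words that differed somewhere would force `e` to identify `a` with `b` there. Hence at most
`(m - 1) ^ N` of the `m ^ N` words on `N` free positions fail for any given `P, a, b`, and the
number of triples does not depend on `N`.

Mathlib's order on `Setoid` is the reverse of the paper's: `s ≤ t` means that `t` is coarser.
-/

open Filter Function

lemma eventually_mul_pow_lt_pow (K : ℕ) {k l : ℕ} (hkl : k < l) :
    ∀ᶠ n in atTop, K * k ^ n < l ^ n := by
  have hl : (0 : ℝ) < l := by exact_mod_cast Nat.zero_lt_of_lt hkl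
  have hratio : Tendsto (fun n : ℕ => (K : ℝ) * ((k : ℝ) / l) ^ n) atTop (nhds 0) := by
    simpa only [mul_zero] using (tendsto_pow_atTop_nhds_zero_of_lt_one (by positivity)
      ((div_lt_one hl).2 (by exact_mod_cast hkl))).const_mul (K : ℝ)
  filter_upwards [hratio.eventually_lt_const one_pos] with n hn
  rw [div_pow, ← mul_div_assoc, div_lt_one (by positivity)] at hn
  exact_mod_cast hn

lemma finite_setoid (α : Type*) [Finite α] : Finite (Setoid α) :=
  Finite.of_injective (fun s : Setoid α => (s : α → α → Prop)) fun _ _ h => Setoid.eq_iff_rel_eq.2 h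

section Words

variable {α X : Type*} {i : α → X} {w w' : X → α} {t : Setoid X}

lemma rel_section_of_ker_le (hw : LeftInverse w i) (ht : Setoid.ker w ≤ t) (x : X) :
    t x (i (w x)) :=
  ht (hw (w x)).symm

lemma comap_comap_of_ker_le (hw : LeftInverse w i) (ht : Setoid.ker w ≤ t) :
    (t.comap i).comap w = t := by
  ext x y
  have hx := rel_section_of_ker_le hw ht x
  have hy := rel_section_of_ker_le hw ht y
  exact ⟨fun h => t.trans (t.trans hx h) (t.symm hy), fun h => t.trans (t.trans (t.symm hx) h) hy⟩

lemma comap_eq_comap_of_rel {P : Setoid α} (h : ∀ x, P (w x) (w' x)) : P.comap w = P.comap w' := by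
  ext x y
  exact ⟨fun hxy => P.trans (P.trans (P.symm (h x)) hxy) (h y),
    fun hxy => P.trans (P.trans (h x) hxy) (P.symm (h y))⟩

lemma rel_of_update_eq [DecidableEq α] {P : Setoid α} {a b c d : α} (hab : P a b)
    (h : update id b a c = update id b a d) : P c d := by
  have rel_update (c : α) : P c (update id b a c) := by
    rcases eq_or_ne c b with rfl | hc
    · simpa only [update_self] using P.symm hab
    · simpa only [update_of_ne hc, id] using P.refl' c
  exact P.trans (h ▸ rel_update c) (P.symm (rel_update d))

/-- The triple `(P, a, b)` witnesses that the partition `ker w` fails the conclusion of the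
combinatorial lemma for `e`, at the coarsening `P.comap w` of `ker w`. The letters `a`, `b` are seen
as elements of `X` via `i`, which is meant to be a section of `w`. -/
structure Obstructs (e : Setoid X → Setoid X) (i : α → X) (P : Setoid α) (a b : α)
    (w : X → α) : Prop where
  rel : P a b
  ker_le : Setoid.ker w ≤ e (P.comap w)
  not_rel : ¬ e (P.comap w) (i a) (i b)

namespace Obstructs

variable {e : Setoid X → Setoid X} {P : Setoid α} {a b : α}

lemma exists_of_not_le (hw : LeftInverse w i) (ht : Setoid.ker w ≤ t)
    (het : Setoid.ker w ≤ e t) (hle : ¬ t ≤ e t) : ∃ P a b, Obstructs e i P a b w := by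
  have hcomap := comap_comap_of_ker_le hw ht
  obtain ⟨x, y, hxy, hexy⟩ : ∃ x y, t x y ∧ ¬ e t x y := by
    simpa only [Setoid.le_def, not_forall, exists_prop] using hle
  refine ⟨t.comap i, w x, w y, ?_, ?_, ?_⟩
  · rwa [← hcomap] at hxy
  · rwa [hcomap]
  · rw [hcomap]
    rwa [← comap_comap_of_ker_le hw het] at hexy

lemma ne (h : Obstructs e i P a b w) : a ≠ b := by
  rintro rfl
  exact h.not_rel (Setoid.refl' _ _)

lemma eq_of_update_eq [DecidableEq α] (h : Obstructs e i P a b w) (h' : Obstructs e i P a b w')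
    (hw : LeftInverse w i) (hw' : LeftInverse w' i)
    (hupdate : ∀ x, update id b a (w x) = update id b a (w' x)) : w = w' := by
  have hcomap : P.comap w' = P.comap w :=
    comap_eq_comap_of_rel fun x => rel_of_update_eq h.rel (hupdate x).symm
  have hker' : Setoid.ker w' ≤ e (P.comap w) := hcomap ▸ h'.ker_le
  funext x
  have hrel : e (P.comap w) (i (w x)) (i (w' x)) :=
    (e _).trans ((e _).symm (rel_section_of_ker_le hw h.ker_le x))
      (rel_section_of_ker_le hw' hker' x)
  have hx := hupdate x
  by_cases hb : w x = b <;> by_cases hb' : w' x = b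
  · rw [hb, hb']
  · have ha : a = w' x := by simpa only [hb, update_self, update_of_ne hb', id] using hx
    rw [hb, ← ha] at hrel
    exact absurd ((e _).symm hrel) h.not_rel
  · have ha : w x = a := by simpa only [hb', update_self, update_of_ne hb, id] using hx
    rw [ha, hb'] at hrel
    exact absurd hrel h.not_rel
  · simpa only [update_of_ne hb, update_of_ne hb', id] using hx

end Obstructs

end Words

section Counting

variable {α Y X : Type*} {f : α ⊕ Y → X} {r : X → α ⊕ Y}

lemma leftInverse_elim_id_comp (hr : LeftInverse r f) (u : Y → α) :
    LeftInverse (Sum.elim id u ∘ r) (f ∘ Sum.inl) :=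
  fun a => congrArg (Sum.elim id u) (hr (Sum.inl a))

variable [Fintype α] [Fintype Y]

open Classical in
lemma card_obstructs_le (hr : LeftInverse r f) (e : Setoid X → Setoid X) (P : Setoid α) (a b : α) :
    Finset.card {u : Y → α | Obstructs e (f ∘ Sum.inl) P a b (Sum.elim id u ∘ r)} ≤
      (Fintype.card α - 1) ^ Fintype.card Y := by
  have hcard : (Fintype.piFinset fun _ : Y => Finset.univ.erase b).card =
      (Fintype.card α - 1) ^ Fintype.card Y := by
    rw [Fintype.card_piFinset, Finset.prod_const, Finset.card_erase_of_mem (Finset.mem_univ b),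
      Finset.card_univ, Finset.card_univ]
  rw [← hcard]
  refine Finset.card_le_card_of_injOn (fun u y => update id b a (u y)) (fun u hu => ?_)
    fun u hu v hv huv => ?_
  · have hab := (Finset.mem_filter.1 hu).2.ne
    refine Fintype.mem_piFinset.2 fun y => Finset.mem_erase.2 ⟨?_, Finset.mem_univ _⟩
    rcases eq_or_ne (u y) b with hy | hy
    · simpa only [hy, update_self] using hab
    · simpa only [update_of_ne hy, id] using hy
  · have hword : Sum.elim id u ∘ r = Sum.elim id v ∘ r := by
      refine (Finset.mem_filter.1 hu).2.eq_of_update_eq (Finset.mem_filter.1 hv).2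
        (leftInverse_elim_id_comp hr u) (leftInverse_elim_id_comp hr v) fun x => ?_
      rw [comp_apply, comp_apply]
      rcases r x with c | y
      · rfl
      · exact congrFun huv y
    funext y
    exact congrFun (hr.surjective.injective_comp_right hword) (Sum.inr y)

lemma exists_forall_not_obstructs [Fintype (Setoid α)] (hr : LeftInverse r f)
    (hcard : Fintype.card (Setoid α × α × α) * (Fintype.card α - 1) ^ Fintype.card Y <
      Fintype.card α ^ Fintype.card Y) (e : Setoid X → Setoid X) :
    ∃ u : Y → α, ∀ P a b, ¬ Obstructs e (f ∘ Sum.inl) P a b (Sum.elim id u ∘ r) := by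
  classical
  by_contra! hobs
  let obstructed (p : Setoid α × α × α) : Finset (Y → α) :=
    {u | Obstructs e (f ∘ Sum.inl) p.1 p.2.1 p.2.2 (Sum.elim id u ∘ r)}
  have hcover : Finset.univ.biUnion obstructed = Finset.univ := by
    refine Finset.eq_univ_iff_forall.2 fun u => ?_
    obtain ⟨P, a, b, h⟩ := hobs u
    exact Finset.mem_biUnion.2
      ⟨(P, a, b), Finset.mem_univ _, Finset.mem_filter.2 ⟨Finset.mem_univ _, h⟩⟩
  have hle := Finset.card_biUnion_le_card_mul Finset.univ obstructed _ fun p _ =>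
    card_obstructs_le hr e p.1 p.2.1 p.2.2
  rw [hcover, Finset.card_univ, Finset.card_univ, Fintype.card_fun] at hle
  exact hcard.not_ge hle

end Counting

theorem comb_lemma_general_general (α : Type*) [Finite α] :
    ∀ᶠ n in atTop, ∀ {X : Type*} (f : α ⊕ Fin n ↪ X) (e : Setoid X → Setoid X),
      ∃ s : Setoid X, (∀ a b, s (f (Sum.inl a)) (f (Sum.inl b)) → a = b) ∧
        ∀ t, s ≤ t → t ≤ e t ∨ ¬ s ≤ e t := by
  cases nonempty_fintype α
  have := finite_setoid α
  cases nonempty_fintype (Setoid α)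
  rcases isEmpty_or_nonempty α with _ | _
  · exact .of_forall fun n X f e =>
      ⟨⊤, isEmptyElim, fun t _ => or_not_of_imp fun h => le_top.trans h⟩
  filter_upwards [eventually_mul_pow_lt_pow (Fintype.card (Setoid α × α × α))
    (Nat.sub_one_lt Fintype.card_ne_zero : Fintype.card α - 1 < _)] with n hn X f e
  have hr : LeftInverse (invFun f) f := leftInverse_invFun f.injective
  obtain ⟨u, hu⟩ := exists_forall_not_obstructs hr (by rwa [Fintype.card_fin]) e
  have hw := leftInverse_elim_id_comp hr u
  refine ⟨Setoid.ker (Sum.elim id u ∘ invFun f), fun a b hab => ?_, fun t ht => ?_⟩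
  · exact (hw a).symm.trans (hab.trans (hw b))
  · by_contra! ⟨hle, het⟩
    obtain ⟨P, a, b, h⟩ := Obstructs.exists_of_not_le hw ht het hle
    exact hu P a b h

lemma qm_of_castAdd_eq {m n : ℕ} {s : Setoid (Fin (m + n))}
    (hs : ∀ a b : Fin m, s (Fin.castAdd n a) (Fin.castAdd n b) → a = b) : Qm m s :=
  fun _ _ hij hj h => hij.ne (Fin.mk.inj (hs ⟨_, hij.trans hj⟩ ⟨_, hj⟩ h))

/-- Lemma 5.1 (combinatorial lemma, general form): for all `m, M` there is `M' ≥ m, M` such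
that for every `e : Q(M') → Q(M')` there is `s ∈ Q^m(M')` with: for all `t ≤ s`, either
`e(t) ≤ t` or `e(t) ≰ s`. -/
theorem comb_lemma_general (m M : ℕ) :
    ∃ M' : ℕ, m ≤ M' ∧ M ≤ M' ∧
      ∀ e : Setoid (Fin M') → Setoid (Fin M'),
        ∃ s : Setoid (Fin M'), Qm m s ∧
          ∀ t : Setoid (Fin M'), QLe t s → (QLe (e t) t ∨ ¬ QLe (e t) s) := by
  obtain ⟨n, hn, hMn⟩ := ((comb_lemma_general_general (Fin m)).and (eventually_ge_atTop M)).exists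
  refine ⟨m + n, m.le_add_right n, hMn.trans (n.le_add_left m), fun e => ?_⟩
  obtain ⟨s, hs, hse⟩ := hn finSumFinEquiv.toEmbedding e
  exact ⟨s, qm_of_castAdd_eq hs, hse⟩
end

section
/- For every k ∈ ℕ with k ≥ 1 there exists M ∈ ℕ such that for all N ≥ M and all a₁, a₂, b₁, b₂ ∈ ℕ satisfying 0 ≤ bᵢ ≤ aᵢ ≤ k and aᵢ ≠ 0 for i ∈ {1,2}, one has (a₁N − b₁)! · (a₂N − b₂)! · ((a₁ + a₂) − (b₁ + b₂))! ≤ ((a₁ + a₂)N − (b₁ + b₂))! · (a₁ − b₁)! · (a₂ − b₂)! (equivalently, (a₁N − b₁)!/(a₁ − b₁)! · (a₂N − b₂)!/(a₂ − b₂)! ≤ ((a₁ + a₂)N − (b₁ + b₂))!/((a₁ + a₂) − (b₁ + b₂))!). -/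
/-!
Put `m = a₁ - b₁`, `n = a₂ - b₂`, `p = a₁N - b₁` and `q = a₂N - b₂`. Dividing by `m! n! p! q!` turns
the inequality into `(m + n).choose n ≤ (p + q).choose q`. A binomial coefficient `(x + y).choose y`
is monotone in `x` and, by symmetry, in `y`; and `m ≤ p` and `n ≤ q` as soon as `1 ≤ N`, so `M = 1`
works.
-/

open Nat

theorem add_choose_le_add_choose {m n p q : ℕ} (hmp : m ≤ p) (hnq : n ≤ q) :
    (m + n).choose n ≤ (p + q).choose q :=
  calc (m + n).choose n
    _ ≤ (p + n).choose n := choose_le_choose n (by gcongr)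
    _ = (p + n).choose p := choose_symm_add.symm
    _ ≤ (p + q).choose p := choose_le_choose p (by gcongr)
    _ = (p + q).choose q := choose_symm_add

theorem factorial_mul_factorial_mul_factorial_add_le {m n p q : ℕ} (hmp : m ≤ p) (hnq : n ≤ q) :
    p ! * q ! * (m + n)! ≤ (p + q)! * m ! * n ! :=
  calc p ! * q ! * (m + n)!
    _ = (m + n).choose n * (p ! * q ! * m ! * n !) := by
      rw [← add_choose_mul_factorial_mul_factorial m n]
      ring
    _ ≤ (p + q).choose q * (p ! * q ! * m ! * n !) :=
      Nat.mul_le_mul_right _ (add_choose_le_add_choose hmp hnq)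
    _ = (p + q)! * m ! * n ! := by
      rw [← add_choose_mul_factorial_mul_factorial p q]
      ring

theorem factorial_combine_bound_general {N a₁ a₂ b₁ b₂ : ℕ} (hN : 1 ≤ N)
    (h₁ : b₁ ≤ a₁) (h₂ : b₂ ≤ a₂) :
    (a₁ * N - b₁)! * (a₂ * N - b₂)! * ((a₁ + a₂) - (b₁ + b₂))! ≤
      ((a₁ + a₂) * N - (b₁ + b₂))! * (a₁ - b₁)! * (a₂ - b₂)! := by
  have ha₁ : a₁ ≤ a₁ * N := Nat.le_mul_of_pos_right a₁ hN
  have ha₂ : a₂ ≤ a₂ * N := Nat.le_mul_of_pos_right a₂ hN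
  rw [Nat.add_mul, ← tsub_add_tsub_comm h₁ h₂,
    ← tsub_add_tsub_comm (h₁.trans ha₁) (h₂.trans ha₂)]
  exact factorial_mul_factorial_mul_factorial_add_le
    (Nat.sub_le_sub_right ha₁ b₁) (Nat.sub_le_sub_right ha₂ b₂)

/-- The claim inside Lemma 5.2: for every `k ≥ 1` there is `M` such that for all `N ≥ M` and
all `a₁, a₂, b₁, b₂` with `bᵢ ≤ aᵢ ≤ k` and `aᵢ ≠ 0`,
`(a₁N−b₁)!/(a₁−b₁)! · (a₂N−b₂)!/(a₂−b₂)! ≤ ((a₁+a₂)N−(b₁+b₂))!/((a₁+a₂)−(b₁+b₂))!`,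
stated multiplicatively. -/
theorem factorial_combine_bound (k : ℕ) (hk : 1 ≤ k) :
    ∃ M : ℕ, ∀ N ≥ M, ∀ a₁ a₂ b₁ b₂ : ℕ,
      b₁ ≤ a₁ → a₁ ≤ k → a₁ ≠ 0 → b₂ ≤ a₂ → a₂ ≤ k → a₂ ≠ 0 →
      Nat.factorial (a₁ * N - b₁) * Nat.factorial (a₂ * N - b₂) *
          Nat.factorial ((a₁ + a₂) - (b₁ + b₂))
        ≤ Nat.factorial ((a₁ + a₂) * N - (b₁ + b₂)) *
            Nat.factorial (a₁ - b₁) * Nat.factorial (a₂ - b₂) := by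
  exact ⟨1, fun _ hN _ _ _ _ h₁ _ _ h₂ _ _ => factorial_combine_bound_general hN h₁ h₂⟩
end

section
/- Let m ≤ k with k ≥ 1, let N ≥ 1, and let t be a partition of {0,…,kN−1} that is a coarsening of some element of Q_k^m(kN). Write t = {X_1, …, X_u} with |X_i| = k_i N (k_i ≥ 1) and set m_i = |X_i ∩ {0,…,m−1}| for each 1 ≤ i ≤ u. Then the number of s ∈ Q_k^m(kN) with t ≤ s equals ∏_{i=1}^{u} (k_i N − m_i)! / ( (N−1)!^{m_i} · N!^{k_i − m_i} · (k_i − m_i)! ). -/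
/-- `Q_k(kN)`: partitions of `{0,…,kN−1}` into exactly `k` classes, each of size `N`. -/
def Qk (k N : ℕ) (s : Setoid (Fin (k * N))) : Prop :=
  Nat.card (Quotient s) = k ∧ ∀ i : Fin (k * N), {j : Fin (k * N) | s i j}.ncard = N

/-- The size of the class of a partition `t` indexed by `c : Quotient t`. -/
noncomputable def classCard {n : ℕ} (t : Setoid (Fin n)) (c : Quotient t) : ℕ :=
  {x : Fin n | Quotient.mk t x = c}.ncard

/-- `k_i`: the size of the `c`-th class of `t`, divided by `N` (each class of a coarsening of
an equipartition into classes of size `N` has size a multiple of `N`). -/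
noncomputable def kIdx {n : ℕ} (t : Setoid (Fin n)) (N : ℕ) (c : Quotient t) : ℕ :=
  classCard t c / N

/-- `m_i`: the number of elements of the `c`-th class of `t` lying in `{0,…,m−1}`. -/
noncomputable def mIdx {n : ℕ} (t : Setoid (Fin n)) (m : ℕ) (c : Quotient t) : ℕ :=
  {x : Fin n | Quotient.mk t x = c ∧ (x : ℕ) < m}.ncard

/-!
Refining `t` amounts to partitioning each class of `t` separately, so the count is a product over
the classes of `t`. Within one class, the block of a chosen point `a` is completed by `N - 1` points
outside `M = {0, …, m - 1}`, and removing that block leaves a smaller instance of the same problem.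
Choosing `a ∈ M` as long as `M` is nonempty makes the number of candidate blocks, and the size of
the remaining instance, independent of the block chosen.
-/

open scoped Nat

/-- A partition into classes of size `N` whose classes each contain at most one point of `M`.
For `M = {0, …, m - 1}` and `N > 0` these are the elements of `Q_k^m(kN)`, see `qk_and_qm_iff`. -/
structure IsSeparatingEquipartition {α : Type*} (M : Set α) (N : ℕ) (s : Setoid α) : Prop where
  ncard_class (x : α) : {y | s x y}.ncard = N
  eq_of_rel {x y : α} : x ∈ M → y ∈ M → s x y → x = y

universe u

variable {α ι : Type*} {M : Set α} {N : ℕ} {s : Setoid α}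

/-- Partitions finer than the fibres of `f` correspond to families of partitions of these fibres. -/
def refinementEquivPi (f : α → ι) : Set.Iic (Setoid.ker f) ≃ ∀ i, Setoid {x // f x = i} where
  toFun s i := (s : Setoid α).comap Subtype.val
  invFun r :=
    { val :=
        { r := fun x y => ∃ i, ∃ (hx : f x = i) (hy : f y = i), r i ⟨x, hx⟩ ⟨y, hy⟩
          iseqv :=
            { refl := fun x => ⟨f x, rfl, rfl, (r (f x)).refl _⟩
              symm := fun ⟨i, hx, hy, h⟩ => ⟨i, hy, hx, (r i).symm h⟩
              trans := by
                rintro x y z ⟨i, hx, hy, hxy⟩ ⟨j, hy', hz, hyz⟩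
                obtain rfl := hy.symm.trans hy'
                exact ⟨i, hx, hz, (r i).trans hxy hyz⟩ } }
      property := fun _ _ ⟨_, hx, hy, _⟩ => hx.trans hy.symm }
  left_inv s := by
    ext x y
    exact ⟨fun ⟨_, _, _, h⟩ => h, fun h => ⟨f y, s.2 h, rfl, h⟩⟩
  right_inv r := by
    ext i ⟨x, hx⟩ ⟨y, hy⟩
    constructor
    · rintro ⟨j, hj, _, h⟩
      obtain rfl := hx.symm.trans hj
      exact h
    · exact fun h => ⟨i, hx, hy, h⟩

theorem ncard_preimage_val (p : α → Prop) (M : Set α) :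
    (Subtype.val ⁻¹' M : Set (Subtype p)).ncard = {x | p x ∧ x ∈ M}.ncard := by
  rw [← Set.ncard_image_of_injective _ Subtype.val_injective]
  congr 1
  ext x
  simp [and_comm]

theorem ncard_class_comap_val {f : α → ι} (hs : s ≤ Setoid.ker f) {i : ι} (x : {x // f x = i}) :
    {y : {x // f x = i} | s.comap Subtype.val x y}.ncard = {y | s x y}.ncard := by
  refine (ncard_preimage_val (f · = i) {y | s x y}).trans ?_
  congr 1
  ext y
  exact and_iff_right_of_imp fun h => (hs h).symm.trans x.2

theorem isSeparatingEquipartition_iff_forall_comap {f : α → ι} (hs : s ≤ Setoid.ker f) :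
    IsSeparatingEquipartition M N s ↔ ∀ i, IsSeparatingEquipartition (Subtype.val ⁻¹' M) N
      (s.comap (Subtype.val : {x // f x = i} → α)) where
  mp h _ :=
    { ncard_class := fun x => (ncard_class_comap_val hs x).trans (h.ncard_class x)
      eq_of_rel := fun hx hy hxy => Subtype.ext (h.eq_of_rel hx hy hxy) }
  mpr h :=
    { ncard_class := fun x =>
        (ncard_class_comap_val hs ⟨x, rfl⟩).symm.trans ((h (f x)).ncard_class ⟨x, rfl⟩)
      eq_of_rel := fun {x y} hx hy hxy => congrArg Subtype.val <|
        (h (f y)).eq_of_rel (x := ⟨x, hs hxy⟩) (y := ⟨y, rfl⟩) hx hy hxy }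

theorem ncard_separating_refinements_eq_prod [Fintype ι] (f : α → ι) :
    {s | IsSeparatingEquipartition M N s ∧ s ≤ Setoid.ker f}.ncard =
      ∏ i, {r : Setoid {x // f x = i} |
        IsSeparatingEquipartition (Subtype.val ⁻¹' M) N r}.ncard := by
  simp only [← Nat.card_coe_set_eq, Set.coe_ofPred]
  rw [← Nat.card_pi]
  refine Nat.card_congr <| (Equiv.subtypeEquivRight fun _ => and_comm).trans <|
    (Equiv.subtypeSubtypeEquivSubtypeInter (· ≤ Setoid.ker f) _).symm.trans <|
    ((refinementEquivPi f).subtypeEquiv fun s => ?_).trans Equiv.subtypePiEquivPi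
  exact isSeparatingEquipartition_iff_forall_comap s.2

theorem card_quotient_mul [Finite α] (h : ∀ x, {y | s x y}.ncard = N) :
    Nat.card (Quotient s) * N = Nat.card α := by
  have := Fintype.ofFinite (Quotient s)
  have card_fiber (c : Quotient s) : Nat.card {x // Quotient.mk s x = c} = N := by
    induction c using Quotient.inductionOn with
    | h x =>
      rw [← h x, ← Nat.card_coe_set_eq]
      exact Nat.card_congr <| Equiv.subtypeEquivRight fun y => Quotient.eq.trans s.comm'
  rw [← Nat.card_congr (Equiv.sigmaFiberEquiv (Quotient.mk s)), Nat.card_sigma,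
    Finset.sum_congr rfl fun c _ => card_fiber c, Finset.sum_const, Finset.card_univ, smul_eq_mul,
    Nat.card_eq_fintype_card]

instance finite_setoid_s11 [Finite α] : Finite (Setoid α) :=
  Finite.of_injective (fun s : Setoid α => s.r) fun _ _ h => Setoid.eq_iff_rel_eq.2 h

namespace IsSeparatingEquipartition

theorem ncard_le_card_quotient [Finite α] (hs : IsSeparatingEquipartition M N s) :
    M.ncard ≤ Nat.card (Quotient s) := by
  rw [← Set.ncard_univ]
  exact Set.ncard_le_ncard_of_injOn (Quotient.mk s) (fun _ _ => Set.mem_univ _)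
    fun _ hx _ hy h => hs.eq_of_rel hx hy (Quotient.exact h)

theorem eq_top [Finite α] (hs : IsSeparatingEquipartition M (Nat.card α) s) : s = ⊤ := by
  refine Setoid.eq_top_iff.2 fun x y => ?_
  have : {y | s x y} = Set.univ := (Set.eq_univ_iff_ncard _).2 (hs.ncard_class x)
  exact this.ge (Set.mem_univ y)

theorem class_eq_iff_le_ker_mem [Finite α] (hs : IsSeparatingEquipartition M N s) {a : α}
    {B : Set α} (ha : a ∈ B) (hB : B.ncard = N) :
    {y | s a y} = B ↔ s ≤ Setoid.ker (· ∈ B) := by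
  constructor
  · rintro rfl x y hxy
    exact propext ⟨fun h => s.trans h hxy, fun h => s.trans h (s.symm hxy)⟩
  · intro h
    refine Set.eq_of_subset_of_ncard_le (fun y hy => (h hy).mp ha) ?_
    rw [hB, hs.ncard_class]

theorem ncard_class_sdiff_singleton (hs : IsSeparatingEquipartition M N s) (a : α) :
    ({y | s a y} \ {a}).ncard = N - 1 := by
  have ha : a ∈ {y | s a y} := s.refl a
  rw [Set.ncard_sdiff_singleton_of_mem ha, hs.ncard_class]

theorem class_sdiff_singleton_subset (hs : IsSeparatingEquipartition M N s) {a : α}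
    (ha : a ∈ M ∨ M = ∅) : {y | s a y} \ {a} ⊆ (insert a M)ᶜ := by
  rintro x ⟨hax, hne⟩ (rfl | hx)
  · exact hne rfl
  rcases ha with ha | rfl
  · exact hne (hs.eq_of_rel ha hx hax).symm
  · exact hx

end IsSeparatingEquipartition

theorem isSeparatingEquipartition_top (hM : M.Subsingleton) :
    IsSeparatingEquipartition M (Nat.card α) ⊤ where
  ncard_class _ := (congrArg Set.ncard (Set.eq_univ_of_forall fun _ => trivial)).trans
    (Set.ncard_univ α)
  eq_of_rel hx hy _ := hM hx hy

theorem ncard_separating_of_subsingleton [Finite α] (hM : M.Subsingleton) :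
    {s | IsSeparatingEquipartition M (Nat.card α) s}.ncard = 1 := by
  refine Set.ncard_eq_one.2 ⟨⊤, Set.eq_singleton_iff_unique_mem.2 ⟨?_, fun s hs => hs.eq_top⟩⟩
  exact isSeparatingEquipartition_top hM

theorem ncard_separating_class_eq [Finite α] {a : α} {B : Set α} (ha : a ∈ B) (hB : B.ncard = N)
    (hBM : (M ∩ B).Subsingleton) :
    {s | IsSeparatingEquipartition M N s ∧ {y | s a y} = B}.ncard =
      {r : Setoid {x // x ∉ B} | IsSeparatingEquipartition (Subtype.val ⁻¹' M) N r}.ncard := by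
  have single_block : {r : Setoid {x // x ∈ B} |
      IsSeparatingEquipartition (Subtype.val ⁻¹' M) N r}.ncard = 1 := by
    have hcard : Nat.card {x // x ∈ B} = N := (Nat.card_coe_set_eq B).trans hB
    rw [← hcard]
    exact ncard_separating_of_subsingleton fun x hx y hy =>
      Subtype.ext (hBM ⟨hx, x.2⟩ ⟨hy, y.2⟩)
  let count (p : α → Prop) : ℕ :=
    {r : Setoid (Subtype p) | IsSeparatingEquipartition (Subtype.val ⁻¹' M) N r}.ncard
  calc {s | IsSeparatingEquipartition M N s ∧ {y | s a y} = B}.ncard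
      = {s | IsSeparatingEquipartition M N s ∧ s ≤ Setoid.ker (· ∈ B)}.ncard := by
        congr 1
        ext s
        exact and_congr_right fun hs => hs.class_eq_iff_le_ker_mem ha hB
    _ = ∏ p, count fun x => (x ∈ B) = p := ncard_separating_refinements_eq_prod _
    _ = count (· ∈ B) * count (· ∉ B) := by
        simp only [Fintype.prod_Prop, eq_iff_iff, iff_true, iff_false]
    _ = count (· ∉ B) := by rw [show count (· ∈ B) = 1 from single_block, one_mul]

theorem ncard_eq_sum_ncard_fiberwise {σ γ : Type*} {S : Set σ} (hS : S.Finite) {C : Finset γ}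
    {g : σ → γ} (hg : Set.MapsTo g S C) : S.ncard = ∑ c ∈ C, {x | x ∈ S ∧ g x = c}.ncard := by
  classical
  lift S to Finset σ using hS
  rw [Set.ncard_coe_finset, Finset.card_eq_sum_card_fiberwise hg]
  refine Finset.sum_congr rfl fun c _ => ?_
  rw [← Set.ncard_coe_finset, Finset.coe_filter]
  rfl

theorem sdiff_singleton_eq_iff_eq_insert {A T : Set α} {a : α} (hA : a ∈ A) (hT : a ∉ T) :
    A \ {a} = T ↔ A = insert a T := by
  constructor
  · rintro rfl
    rw [Set.insert_sdiff_singleton, Set.insert_eq_of_mem hA]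
  · rintro rfl
    exact Set.insert_sdiff_self_of_notMem hT

theorem ncard_separating_eq_sum [Finite α] (hN : 0 < N) {a : α} (ha : a ∈ M ∨ M = ∅) :
    {s | IsSeparatingEquipartition M N s}.ncard =
      ∑ T ∈ (Set.toFinite (insert a M)ᶜ).toFinset.powersetCard (N - 1),
        {r : Setoid {x // x ∉ insert a (T : Set α)} |
          IsSeparatingEquipartition (Subtype.val ⁻¹' M) N r}.ncard := by
  let others (s : Setoid α) : Finset α := (Set.toFinite ({y | s a y} \ {a})).toFinset
  have maps_to : Set.MapsTo others {s | IsSeparatingEquipartition M N s}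
      ((Set.toFinite (insert a M)ᶜ).toFinset.powersetCard (N - 1)) := fun s hs => by
    rw [Finset.mem_coe, Finset.mem_powersetCard, Set.Finite.toFinset_subset_toFinset,
      ← Set.ncard_eq_toFinset_card]
    exact ⟨hs.class_sdiff_singleton_subset ha, hs.ncard_class_sdiff_singleton a⟩
  rw [ncard_eq_sum_ncard_fiberwise (Set.toFinite _) maps_to]
  refine Finset.sum_congr rfl fun T hT => ?_
  rw [Finset.mem_powersetCard, Set.Finite.subset_toFinset] at hT
  obtain ⟨hTM, hTN⟩ := hT
  have haT : a ∉ (T : Set α) := fun h => hTM h (Set.mem_insert a M)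
  have others_eq_iff (s : Setoid α) : others s = T ↔ {y | s a y} = insert a (T : Set α) := by
    rw [← Finset.coe_inj, Set.Finite.coe_toFinset]
    exact sdiff_singleton_eq_iff_eq_insert (s.refl a) haT
  have ncard_block : (insert a (T : Set α)).ncard = N := by
    rw [Set.ncard_insert_of_notMem haT, Set.ncard_coe_finset, hTN, Nat.sub_add_cancel hN]
  have block_inter : (M ∩ insert a (T : Set α)).Subsingleton := by
    refine Set.subsingleton_of_subset_singleton (a := a) fun x ⟨hxM, hx⟩ => ?_
    exact hx.resolve_right fun hxT => hTM hxT (Set.mem_insert_of_mem a hxM)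
  simp only [Set.mem_ofPred_eq, others_eq_iff]
  exact ncard_separating_class_eq (Set.mem_insert a _) ncard_block block_inter

theorem card_notMem_insert [Finite α] {a : α} {T : Finset α} (haT : a ∉ T) :
    Nat.card {x // x ∉ insert a (T : Set α)} = Nat.card α - (T.card + 1) := by
  rw [← Set.ncard_coe_finset, ← Set.ncard_insert_of_notMem (a := a) haT, ← Set.ncard_compl]
  exact Nat.card_coe_set_eq _

theorem ncard_preimage_val_notMem_insert {a : α} {T : Set α} (hT : Disjoint T M) :
    (Subtype.val ⁻¹' M : Set {x // x ∉ insert a T}).ncard = (M \ {a}).ncard := by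
  rw [ncard_preimage_val]
  congr 1
  ext x
  have := fun hx : x ∈ M => hT.notMem_of_mem_right hx
  simp only [Set.mem_insert_iff, Set.mem_ofPred_eq, Set.mem_sdiff, Set.mem_singleton_iff]
  tauto

theorem ncard_separating_mul_eq_choose_mul {α : Type u} [Finite α] {M : Set α} (hN : 0 < N) {a : α}
    (ha : a ∈ M ∨ M = ∅) {D E : ℕ}
    (hDE : ∀ {β : Type u} [Finite β] {L : Set β}, Nat.card β = Nat.card α - N →
      L.ncard = (M \ {a}).ncard → {r | IsSeparatingEquipartition L N r}.ncard * D = E) :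
    {s | IsSeparatingEquipartition M N s}.ncard * D =
      (Nat.card α - (insert a M).ncard).choose (N - 1) * E := by
  have summand : ∀ T ∈ (Set.toFinite (insert a M)ᶜ).toFinset.powersetCard (N - 1),
      {r : Setoid {x // x ∉ insert a (T : Set α)} |
        IsSeparatingEquipartition (Subtype.val ⁻¹' M) N r}.ncard * D = E := fun T hT => by
    rw [Finset.mem_powersetCard, Set.Finite.subset_toFinset] at hT
    obtain ⟨hTM, hTN⟩ := hT
    have haT : a ∉ T := fun h => hTM h (Set.mem_insert a M)
    refine hDE ?_ (ncard_preimage_val_notMem_insert ?_)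
    · rw [card_notMem_insert haT, hTN, Nat.sub_add_cancel hN]
    · exact disjoint_compl_left.mono hTM (Set.subset_insert a M)
  rw [ncard_separating_eq_sum hN ha, Finset.sum_mul, Finset.sum_congr rfl summand,
    Finset.sum_const, smul_eq_mul, Finset.card_powersetCard, ← Set.ncard_eq_toFinset_card,
    Set.ncard_compl]

theorem choose_mul_factorial_mul_factorial_sub {m K : ℕ} (hN : 0 < N) (hm : m ≤ K) :
    ((K + 1) * N - (m + 1)).choose (N - 1) * (K * N - m)! * (N - 1)! =
      ((K + 1) * N - (m + 1))! := by
  have hmKN : m ≤ K * N := hm.trans (Nat.le_mul_of_pos_right K hN)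
  have hle : N - 1 ≤ (K + 1) * N - (m + 1) := by rw [Nat.succ_mul]; omega
  have hsub : (K + 1) * N - (m + 1) - (N - 1) = K * N - m := by rw [Nat.succ_mul]; omega
  rw [mul_right_comm, ← hsub, Nat.choose_mul_factorial_mul_factorial hle]

theorem ncard_separating_of_isEmpty [IsEmpty α] :
    {s | IsSeparatingEquipartition M N s}.ncard = 1 := by
  exact Set.ncard_eq_one.2 ⟨⊤, Set.eq_singleton_iff_unique_mem.2
    ⟨⟨isEmptyElim, fun {x} => isEmptyElim x⟩, fun s _ => Setoid.ext isEmptyElim⟩⟩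

theorem ncard_separating_mul [Finite α] {K : ℕ} (hN : 0 < N) (hα : Nat.card α = K * N)
    (hM : M.ncard ≤ K) :
    {s | IsSeparatingEquipartition M N s}.ncard *
        ((N - 1)! ^ M.ncard * N ! ^ (K - M.ncard) * (K - M.ncard)!) =
      (K * N - M.ncard)! := by
  induction K generalizing α with
  | zero =>
    have : IsEmpty α := by rwa [zero_mul, Finite.card_eq_zero_iff] at hα
    simp [ncard_separating_of_isEmpty, Set.eq_empty_of_isEmpty M]
  | succ K ih =>
    have : Nonempty α := (Nat.card_pos_iff.1 (hα ▸ Nat.mul_pos K.succ_pos hN)).1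
    obtain ⟨a, ha⟩ : ∃ a, a ∈ M ∨ M = ∅ := by
      obtain rfl | ⟨a, ha⟩ := M.eq_empty_or_nonempty
      · exact ⟨Classical.arbitrary α, .inr rfl⟩
      · exact ⟨a, .inl ha⟩
    have hM' : (M \ {a}).ncard ≤ K := by
      rcases ha with ha | rfl
      · rw [Set.ncard_sdiff_singleton_of_mem ha]
        omega
      · simp
    have recursion := ncard_separating_mul_eq_choose_mul hN ha fun hβ hL =>
      hL ▸ ih (by rw [hβ, hα, Nat.succ_mul, Nat.add_sub_cancel]) (hL ▸ hM')
    have choose_identity := choose_mul_factorial_mul_factorial_sub hN hM'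
    rw [hα] at recursion
    rcases ha with ha | rfl
    · rw [Set.insert_eq_of_mem ha] at recursion
      rw [← Set.ncard_sdiff_singleton_add_one ha] at recursion ⊢
      rw [Nat.add_sub_add_right, pow_succ]
      linear_combination (N - 1)! * recursion + choose_identity
    · simp only [Set.empty_sdiff, Set.ncard_empty, insert_empty_eq, Set.ncard_singleton, pow_zero,
        one_mul, Nat.sub_zero, zero_add] at recursion choose_identity ⊢
      rw [← Nat.mul_factorial_pred (Nat.mul_pos (Nat.add_one_pos K) hN).ne', ← choose_identity,
        pow_succ, Nat.factorial_succ]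
      linear_combination N ! * (K + 1) * recursion + (K + 1) *
        ((K + 1) * N - 1).choose (N - 1) * (K * N)! * (Nat.mul_factorial_pred hN.ne').symm

theorem ncard_separating_mul_of_exists [Finite α] [Nonempty α]
    (h : ∃ s, IsSeparatingEquipartition M N s) :
    {s | IsSeparatingEquipartition M N s}.ncard *
        ((N - 1)! ^ M.ncard * N ! ^ (Nat.card α / N - M.ncard) * (Nat.card α / N - M.ncard)!) =
      (Nat.card α / N * N - M.ncard)! := by
  obtain ⟨s, hs⟩ := h
  have hN : 0 < N := hs.ncard_class (Classical.arbitrary α) ▸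
    (Set.ncard_pos (Set.toFinite _)).2 ⟨_, s.refl _⟩
  have hcard := card_quotient_mul hs.ncard_class
  rw [← hcard, Nat.mul_div_cancel _ hN]
  exact ncard_separating_mul hN hcard.symm hs.ncard_le_card_quotient

theorem count_finer_equipartitions_general [Finite α] (M : Set α) (N : ℕ) (t : Setoid α)
    (ht : ∃ s₀ : Setoid α, IsSeparatingEquipartition M N s₀ ∧ s₀ ≤ t) :
    {s : Setoid α | IsSeparatingEquipartition M N s ∧ s ≤ t}.ncard *
        (∏ᶠ c : Quotient t,
          (N - 1)! ^ {x | Quotient.mk t x = c ∧ x ∈ M}.ncard *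
            N ! ^ ({x | Quotient.mk t x = c}.ncard / N -
              {x | Quotient.mk t x = c ∧ x ∈ M}.ncard) *
            ({x | Quotient.mk t x = c}.ncard / N -
              {x | Quotient.mk t x = c ∧ x ∈ M}.ncard)!) =
      ∏ᶠ c : Quotient t, ({x | Quotient.mk t x = c}.ncard / N * N -
        {x | Quotient.mk t x = c ∧ x ∈ M}.ncard)! := by
  have := Fintype.ofFinite (Quotient t)
  rw [← t.ker_mk_eq] at ht
  obtain ⟨s₀, hs₀, hle⟩ := ht
  have hcount := ncard_separating_refinements_eq_prod (M := M) (N := N) (Quotient.mk t)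
  rw [show Setoid.ker (Quotient.mk t) = t from t.ker_mk_eq] at hcount
  rw [hcount, finprod_eq_prod_of_fintype, finprod_eq_prod_of_fintype, ← Finset.prod_mul_distrib]
  refine Finset.prod_congr rfl fun c _ => ?_
  have : Nonempty {x // Quotient.mk t x = c} := nonempty_subtype.2 (Quotient.exists_rep c)
  have count_class := ncard_separating_mul_of_exists
    ⟨_, (isSeparatingEquipartition_iff_forall_comap hle).1 hs₀ c⟩
  rwa [ncard_preimage_val (Quotient.mk t · = c) M] at count_class

theorem qLe_iff_le {n : ℕ} {s t : Setoid (Fin n)} : QLe t s ↔ s ≤ t :=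
  ⟨fun h _ _ => h _ _, fun h _ _ => @h _ _⟩

theorem qk_and_qm_iff {m k : ℕ} (hN : 0 < N) {s : Setoid (Fin (k * N))} :
    Qk k N s ∧ Qm m s ↔ IsSeparatingEquipartition {x : Fin (k * N) | (x : ℕ) < m} N s := by
  constructor
  · rintro ⟨⟨-, hclass⟩, hm⟩
    refine ⟨hclass, fun {x y} hx hy hxy => ?_⟩
    rcases lt_trichotomy x y with hlt | heq | hlt
    · exact absurd hxy (hm x y hlt hy)
    · exact heq
    · exact absurd (s.symm hxy) (hm y x hlt hx)
  · refine fun hs => ⟨⟨Nat.eq_of_mul_eq_mul_right hN ?_, hs.ncard_class⟩, ?_⟩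
    · rw [card_quotient_mul hs.ncard_class, Nat.card_fin]
    · exact fun i j hij hj h => hij.ne (congrArg Fin.val (hs.eq_of_rel (hij.trans hj) hj h))

/-- The counting formula from the proof of Lemma 5.2: if `t` is a coarsening of some element
of `Q_k^m(kN)`, with classes `X_i` of sizes `k_i N` and `m_i = |X_i ∩ {0,…,m−1}|`, then
`|{s ∈ Q_k^m(kN) : t ≤ s}| = ∏_i (k_i N − m_i)! / ((N−1)!^{m_i} · N!^{k_i−m_i} · (k_i−m_i)!)`,
stated multiplicatively. -/
theorem count_finer_equipartitions (m k N : ℕ) (hk : 1 ≤ k) (hmk : m ≤ k) (hN : 1 ≤ N)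
    (t : Setoid (Fin (k * N)))
    (ht : ∃ s₀ : Setoid (Fin (k * N)), Qk k N s₀ ∧ Qm m s₀ ∧ QLe t s₀) :
    {s : Setoid (Fin (k * N)) | (Qk k N s ∧ Qm m s) ∧ QLe t s}.ncard *
        (∏ᶠ c : Quotient t,
          (Nat.factorial (N - 1)) ^ (mIdx t m c) *
            (Nat.factorial N) ^ (kIdx t N c - mIdx t m c) *
            Nat.factorial (kIdx t N c - mIdx t m c))
      = ∏ᶠ c : Quotient t, Nat.factorial (kIdx t N c * N - mIdx t m c) := by
  simp only [← and_assoc, qk_and_qm_iff (k := k) (m := m) hN, qLe_iff_le] at ht ⊢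
  exact count_finer_equipartitions_general _ N t ht
end

section
/- Let E be a countable Borel equivalence relation on the Milliken space S_∞(2^{<ℕ}) of strong subtrees of 2^{<ℕ}. Then there exists a Ramsey conull set 𝓓 ⊆ S_∞(2^{<ℕ}) such that for all B ∈ 𝓓 and all A, A' ∈ S_∞(2^{<ℕ}) with A ≤ B and A' ≤ B, one has A E A' if and only if A = A'. -/
/-- The `ℓ`-th splitting level (height) of a subset `A` of the full binary tree `2^{<ℕ}`
(finite binary strings, modelled as `List Bool`): the `ℓ`-th smallest length of a member
of `A`. -/
noncomputable def levelOf (A : Set (List Bool)) (ℓ : ℕ) : ℕ :=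
  Nat.nth (fun h => ∃ a ∈ A, a.length = h) ℓ

/-- `A` is an (infinite) strong subtree of `2^{<ℕ}`: there is a strictly increasing sequence
`k₀ < k₁ < ⋯` such that `A` is partitioned into its level sets `A(ℓ) = A ∩ 2^{k_ℓ}`,
`A(0)` is a singleton (the root), every `a ∈ A(ℓ)` and `i ∈ {0,1}` admit exactly one
`b ∈ A(ℓ+1)` extending `a⌢i`, and every member of `A(ℓ+1)` arises this way. -/
def IsStrongSubtree (A : Set (List Bool)) : Prop :=
  ∃ k : ℕ → ℕ, StrictMono k ∧
    (∀ a ∈ A, ∃ ℓ, a.length = k ℓ) ∧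
    (∃! a, a ∈ A ∧ a.length = k 0) ∧
    (∀ ℓ : ℕ, ∀ a ∈ A, a.length = k ℓ → ∀ i : Bool,
      ∃! b, b ∈ A ∧ b.length = k (ℓ + 1) ∧ (a ++ [i]) <+: b) ∧
    (∀ ℓ : ℕ, ∀ b ∈ A, b.length = k (ℓ + 1) →
      ∃ a ∈ A, a.length = k ℓ ∧ ∃ i : Bool, (a ++ [i]) <+: b)

/-- The Milliken space `S_∞(2^{<ℕ})` of all strong subtrees of `2^{<ℕ}`, viewed as a subset of
the Polish space `2^{2^{<ℕ}}` with the induced Borel structure. -/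
def Sinf : Type := {A : Set (List Bool) // IsStrongSubtree A}

instance : MeasurableSpace Sinf :=
  inferInstanceAs (MeasurableSpace {A : Set (List Bool) // IsStrongSubtree A})

/-- The finite approximation `r_n(A) = A(0) ∪ ⋯ ∪ A(n−1)`: members of `A` of height among
the first `n` levels of `A`. -/
noncomputable def approxT (A : Set (List Bool)) (n : ℕ) : Set (List Bool) :=
  {a ∈ A | ∃ ℓ < n, a.length = levelOf A ℓ}

/-- `s ⊑ A`: `s = r_n(A)` for some `n`. -/
def InitSegT (s A : Set (List Bool)) : Prop := ∃ n, s = approxT A n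

/-- The Ellentuck cube `[s, A] = {B ∈ S_∞(2^{<ℕ}) : s ⊑ B and B ⊆ A}`. -/
def cubeT (s : Set (List Bool)) (A : Sinf) : Set Sinf :=
  {B | InitSegT s B.1 ∧ B.1 ⊆ A.1}

/-- `𝓧 ⊆ S_∞(2^{<ℕ})` is Ramsey null. -/
def RamseyNullT (X : Set Sinf) : Prop :=
  ∀ s A, (cubeT s A).Nonempty → ∃ B ∈ cubeT s A, cubeT s B ∩ X = ∅

/-- `𝓧 ⊆ S_∞(2^{<ℕ})` is Ramsey conull. -/
def RamseyConullT (X : Set Sinf) : Prop := RamseyNullT Xᶜ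

/-!
A strong subtree is the range of exactly one strong embedding of the tree into itself. Strong
embeddings form a Polish monoid in which the subtrees of the range of `B` are the ranges of the
products `B * α`, and the Ellentuck cube of `B` at level `n` is the coset of `B` by the submonoid
`fixing n` of embeddings that are the identity below level `n`. By the Carlson–Simpson theorem and
fusion, every analytic set of embeddings is decided by each such coset after shrinking.

Let `R` be the analytic set of related pairs `(A, A')` such that `A'` has infinitely many nodes
outside `A`, and let `g` be a continuous function on the Baire space with range `R`. Shrink `B` so
that it decides which finite pieces of `g` contain a pair below `B` with given initial traces. If
`(B * α, B * α')` is such a pair, pick a node `y` of `α'` outside `α` and high above the traces.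
Two embeddings that agree on `α` and send `y` to different nodes turn the pair into two pairs with
the same first member and different second members, and lie in the same piece of `g`. After
another fusion every first member of a pair below `B` has this splitting property, so no piece of
its section determines the second member. The section is the continuous image of a closed subset of
the Baire space, so by the Baire category theorem it is uncountable, which is impossible. Since of
two distinct embeddings at least one has infinitely many nodes outside the other, applying this in
both coordinates leaves only the diagonal.
-/

open Set Filter Topology MeasureTheory

/-! ### The Carlson–Simpson theorem -/

/-- The witness `p` generates a minimal closed left ideal. -/
theorem exists_forall_exists_mul_mul_eq {M : Type*} [Semigroup M] [Nonempty M]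
    [TopologicalSpace M] [CompactSpace M] [T2Space M]
    (hM : ∀ r : M, Continuous fun x => x * r) : ∃ p : M, ∀ x, ∃ y, y * (x * p) = p := by
  let S : Set (Set M) := {N | IsClosed N ∧ N.Nonempty ∧ ∀ x, ∀ l ∈ N, x * l ∈ N}
  have hchain : ∀ c ⊆ S, IsChain (· ⊆ ·) c → ∃ N ∈ S, ∀ s ∈ c, N ⊆ s := by
    intro c hcS hc
    refine ⟨⋂₀ c, ⟨isClosed_sInter fun t ht => (hcS ht).1, ?_, fun x l hl t ht =>
      (hcS ht).2.2 x l (hl t ht)⟩, fun s hs => sInter_subset_of_mem hs⟩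
    obtain rfl | hne := c.eq_empty_or_nonempty
    · simp
    have := hne.to_subtype
    exact IsCompact.nonempty_sInter_of_directed_nonempty_isCompact_isClosed
      (show IsChain (· ⊇ ·) c from hc.symm).directedOn (fun s hs => (hcS hs).2.1)
      (fun s hs => (hcS hs).1.isCompact) fun s hs => (hcS hs).1
  obtain ⟨N, hN⟩ := zorn_superset S hchain
  obtain ⟨p, hp⟩ := hN.prop.2.1
  refine ⟨p, fun x => ?_⟩
  have hsub : range (· * (x * p)) ⊆ N := by
    rintro _ ⟨y, rfl⟩
    exact hN.prop.2.2 y _ (hN.prop.2.2 x p hp)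
  have hmem : range (· * (x * p)) ∈ S := by
    refine ⟨(isCompact_range (hM _)).isClosed, ⟨_, p, rfl⟩, ?_⟩
    rintro z _ ⟨y, rfl⟩
    exact ⟨z * y, mul_assoc _ _ _⟩
  exact hN.le_of_le hmem hsub hp

section Ultrafilter

attribute [local instance] Ultrafilter.mul Ultrafilter.semigroup

theorem ultrafilter_map_mul {V W : Type*} [Mul V] [Mul W] (φ : V →ₙ* W) (p q : Ultrafilter V) :
    (p * q).map φ = p.map φ * q.map φ := by
  refine Ultrafilter.coe_inj.1 (Filter.ext' fun P => ?_)
  simp [Ultrafilter.eventually_mul, Ultrafilter.coe_map]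

theorem ultrafilter_mul_mem_of_left {V : Type*} [Mul V] {R : Set V}
    (hR : ∀ r ∈ R, ∀ x, r * x ∈ R) {p : Ultrafilter V} (hp : R ∈ p) (q : Ultrafilter V) :
    R ∈ p * q := by
  have hev : ∀ᶠ r in (p : Filter V), ∀ᶠ x in (q : Filter V), r * x ∈ R :=
    mem_of_superset hp fun r hr => Eventually.of_forall (hR r hr)
  exact (Ultrafilter.eventually_mul p q (· ∈ R)).2 hev

theorem exists_ultrafilter_mul_map_eq {Λ V W : Type*} [Semigroup V] [Semigroup W] [Nonempty W]
    (T : Λ → V →ₙ* W) (ι : W →ₙ* V) (hT : ∀ a w, T a (ι w) = w) {R : Set V} (hR : R.Nonempty)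
    (hRV : ∀ r ∈ R, ∀ x, r * x ∈ R) :
    ∃ (p : Ultrafilter W) (q : Ultrafilter V), R ∈ q ∧ (∀ a, p * q.map (T a) = p) ∧
      ∀ a b, q.map (T a) * q.map (T b) = q.map (T a) := by
  obtain ⟨p, hp⟩ := exists_forall_exists_mul_mul_eq
    (fun r : Ultrafilter W => Ultrafilter.continuous_mul_left r)
  obtain ⟨v, hv⟩ := hR
  let Q : Set (Ultrafilter V) := {q | R ∈ q} ∩ range (· * p.map ι)
  have hv' : R ∈ (pure v : Ultrafilter V) := hv
  have hQne : Q.Nonempty :=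
    ⟨pure v * p.map ι, ultrafilter_mul_mem_of_left hRV hv' (p.map ι), pure v, rfl⟩
  have hQc : IsCompact Q := ((ultrafilter_isClosed_basic R).inter
    (isCompact_range (Ultrafilter.continuous_mul_left _)).isClosed).isCompact
  have hQmul : ∀ q₁ ∈ Q, ∀ q₂ ∈ Q, q₁ * q₂ ∈ Q := by
    rintro q₁ ⟨h₁, -⟩ _ ⟨-, x, rfl⟩
    exact ⟨ultrafilter_mul_mem_of_left hRV h₁ _, q₁ * x, mul_assoc _ _ _⟩
  obtain ⟨q, ⟨hqR, x, hx⟩, hq⟩ := exists_idempotent_in_compact_subsemigroup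
    (fun r => Ultrafilter.continuous_mul_left r) Q hQne hQc hQmul
  have hidem : ∀ a, q.map (T a) * q.map (T a) = q.map (T a) := fun a => by
    rw [← ultrafilter_map_mul, hq]
  have hmap : ∀ a, q.map (T a) = x.map (T a) * p := by
    intro a
    have hid : T a ∘ ι = id := funext (hT a)
    rw [← hx, ultrafilter_map_mul, Ultrafilter.map_map, hid, Ultrafilter.map_id]
  have habsorb : ∀ a, p * q.map (T a) = p := by
    intro a
    obtain ⟨y, hy⟩ := hp (x.map (T a))
    rw [← hmap] at hy
    rw [← hy, mul_assoc, hidem]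
  refine ⟨p, q, hqR, habsorb, fun a b => ?_⟩
  rw [hmap a, mul_assoc, habsorb]

theorem exists_mem_ultrafilter_forall_eventually_mul_mem {Λ W : Type*} [Finite Λ] [Semigroup W]
    {p : Ultrafilter W} {r : Λ → Ultrafilter W} (hp : ∀ a, p * r a = p)
    (hr : ∀ a b, r a * r b = r a) {A : Set W} (hA : A ∈ p) :
    ∃ S ∈ p, S ⊆ A ∧ ∀ w ∈ S, ∀ a, ∀ᶠ x in (r a : Filter W), w * x ∈ S := by
  refine ⟨{w ∈ A | ∀ a, ∀ᶠ x in (r a : Filter W), w * x ∈ A}, ?_, fun w hw => hw.1, ?_⟩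
  · refine inter_mem hA (eventually_all.2 fun a => ?_)
    rw [← Ultrafilter.eventually_mul p (r a) (· ∈ A), hp]
    exact hA
  · rintro w ⟨-, hw⟩ a
    have hstep : ∀ b, ∀ᶠ x in (r a : Filter W), ∀ᶠ y in (r b : Filter W), w * (x * y) ∈ A := by
      intro b
      rw [← Ultrafilter.eventually_mul (r a) (r b) (fun x => w * x ∈ A), hr]
      exact hw a
    filter_upwards [hw a, eventually_all.2 hstep] with x hx hxy
    exact ⟨hx, fun b => by simpa only [mul_assoc] using hxy b⟩

theorem exists_monochromatic_forall_finite_exists_mul_mem {Λ V W κ : Type*} [Finite Λ]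
    [Semigroup V] [Semigroup W] [Nonempty W] [Finite κ] (T : Λ → V →ₙ* W) (ι : W →ₙ* V)
    (hT : ∀ a w, T a (ι w) = w) {R : Set V} (hR : R.Nonempty) (hRV : ∀ r ∈ R, ∀ x, r * x ∈ R)
    (c : W → κ) :
    ∃ (S : Set W) (i : κ), S.Nonempty ∧ (∀ w ∈ S, c w = i) ∧
      ∀ G ⊆ S, G.Finite → ∃ z ∈ R, ∀ w ∈ G, ∀ a, w * T a z ∈ S := by
  obtain ⟨p, q, hRq, hp, hq⟩ := exists_ultrafilter_mul_map_eq T ι hT hR hRV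
  obtain ⟨i, hi⟩ := Ultrafilter.eq_pure_of_finite (p.map c)
  have hA : {w | c w = i} ∈ p := by
    have : {i} ∈ p.map c := hi ▸ Ultrafilter.mem_pure.2 rfl
    exact this
  obtain ⟨S, hSp, hSA, hS⟩ := exists_mem_ultrafilter_forall_eventually_mul_mem hp hq hA
  refine ⟨S, i, p.nonempty_of_mem hSp, hSA, fun G hGS hG => ?_⟩
  have hev : ∀ᶠ z in (q : Filter V), ∀ w ∈ G, ∀ a, w * T a z ∈ S :=
    (eventually_all_finite hG).2 fun w hw => eventually_all.2 fun a => hS w (hGS hw) a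
  obtain ⟨z, hzR, hz⟩ := ((show ∀ᶠ z in (q : Filter V), z ∈ R from hRq).and hev).exists
  exact ⟨z, hzR, hz⟩

end Ultrafilter

/-- The word `s₀ z₀(s₀) s₁ z₁(s₁) ⋯` obtained from the variable words `zᵢ`, in which `none` is the
variable, by substituting `sᵢ` for the variable of `zᵢ`. -/
def concatSubst {Λ : Type*} (z : ℕ → List (Option Λ)) (s : List Λ) : List Λ :=
  s.zipIdx.flatMap fun p => p.1 :: (z p.2).map fun o => o.getD p.1

@[simp] theorem concatSubst_nil {Λ : Type*} (z : ℕ → List (Option Λ)) : concatSubst z [] = [] :=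
  rfl

theorem concatSubst_append_singleton {Λ : Type*} (z : ℕ → List (Option Λ)) (s : List Λ) (a : Λ) :
    concatSubst z (s ++ [a]) =
      concatSubst z s ++ a :: (z s.length).map fun o => o.getD a := by
  simp [concatSubst, List.zipIdx_append]

theorem map_concatSubst {Λ M : Type*} (f : Λ → M) (z : ℕ → List (Option Λ)) (s : List Λ) :
    (concatSubst z s).map f = concatSubst (fun i => (z i).map (Option.map f)) (s.map f) := by
  induction s using List.reverseRecOn with
  | nil => rfl
  | append_singleton s a ih =>
    simp [concatSubst_append_singleton, ih, Function.comp_def, Option.getD_map]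

theorem length_concatSubst {Λ : Type*} (z : ℕ → List (Option Λ)) (s : List Λ) :
    (concatSubst z s).length = ∑ i ∈ Finset.range s.length, ((z i).length + 1) := by
  induction s using List.reverseRecOn with
  | nil => rfl
  | append_singleton s a ih => simp [concatSubst_append_singleton, ih, Finset.sum_range_succ]

theorem carlson_simpson {Λ κ : Type*} [Finite Λ] [Finite κ] (c : List Λ → κ) :
    ∃ (w : List Λ) (z : ℕ → List (Option Λ)) (i : κ), ∀ s, c (w ++ concatSubst z s) = i := by
  have hsome : ∀ (a : Λ) (w : List Λ), (w.map some).map (fun o => o.getD a) = w := by simp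
  obtain ⟨S, i, hne, hSi, hS⟩ := exists_monochromatic_forall_finite_exists_mul_mem
    (W := FreeMonoid Λ) (V := FreeMonoid (Option Λ))
    (fun a => (FreeMonoid.map fun o : Option Λ => o.getD a).toMulHom) (FreeMonoid.map some).toMulHom
    hsome
    (R := range (FreeMonoid.of none * ·)) (range_nonempty _)
    (by rintro _ ⟨z, rfl⟩ x; exact ⟨z * x, (mul_assoc _ _ _).symm⟩) c
  obtain ⟨w, hw⟩ : ∃ w : List Λ, w ∈ S := hne
  have hstep : ∀ G : {G : Set (List Λ) // G ⊆ S ∧ G.Finite}, ∃ z : List (Option Λ),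
      ∀ w ∈ G.1, ∀ a, w ++ a :: z.map (fun o => o.getD a) ∈ S := by
    rintro ⟨G, hG, hfin⟩
    obtain ⟨_, ⟨z, rfl⟩, hz⟩ := hS G hG hfin
    exact ⟨z, hz⟩
  choose Z hZ using hstep
  let next : {G : Set (List Λ) // G ⊆ S ∧ G.Finite} → {G : Set (List Λ) // G ⊆ S ∧ G.Finite} :=
    fun G => ⟨(fun p : List Λ × Λ => p.1 ++ p.2 :: (Z G).map fun o => o.getD p.2) ''
      (G.1 ×ˢ univ), by rintro _ ⟨⟨u, a⟩, ⟨hu, -⟩, rfl⟩; exact hZ G u hu a,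
      (G.2.2.prod finite_univ).image _⟩
  let G : ℕ → {G : Set (List Λ) // G ⊆ S ∧ G.Finite} := fun n =>
    next^[n] ⟨{w}, singleton_subset_iff.2 hw, finite_singleton w⟩
  have hG : ∀ s, w ++ concatSubst (fun n => Z (G n)) s ∈ (G s.length).1 := by
    intro s
    induction s using List.reverseRecOn with
    | nil => simp [G]
    | append_singleton s a ih =>
      have hsucc : G (s.length + 1) = next (G s.length) := Function.iterate_succ_apply' _ _ _
      rw [concatSubst_append_singleton, ← List.append_assoc, List.length_append,
        List.length_singleton, hsucc]
      exact ⟨(_, a), ⟨ih, trivial⟩, rfl⟩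
  exact ⟨w, fun n => Z (G n), i, fun s => hSi _ ((G s.length).2.1 (hG s))⟩

/-! ### Sequences of natural numbers and Polish spaces -/

theorem exists_forall_exists_res_of_forall_exists_cons {Q : ℕ → List ℕ → Prop} {k : ℕ}
    (hQ : Q k []) (hcons : ∀ k u, Q k u → ∃ j > k, ∃ i, Q j (i :: u)) :
    ∃ w : ℕ → ℕ, ∀ t, ∃ j ≥ t, Q j (PiNat.res w t) := by
  choose j hj i hi using hcons
  let next : {p : ℕ × List ℕ // Q p.1 p.2} → {p : ℕ × List ℕ // Q p.1 p.2} :=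
    fun p => ⟨(j _ _ p.2, i _ _ p.2 :: p.1.2), hi _ _ p.2⟩
  let s : ℕ → {p : ℕ × List ℕ // Q p.1 p.2} := fun t => next^[t] ⟨(k, []), hQ⟩
  have hs : ∀ t, s (t + 1) = next (s t) := fun t => Function.iterate_succ_apply' _ _ _
  have hres : ∀ t, t ≤ (s t).1.1 ∧ (s t).1.2 = PiNat.res (fun t => i _ _ (s t).2) t := by
    intro t
    induction t with
    | zero => exact ⟨Nat.zero_le _, rfl⟩
    | succ t ih =>
      rw [hs, PiNat.res_succ, ← ih.2]
      exact ⟨ih.1.trans_lt (hj _ _ (s t).2), rfl⟩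
  exact ⟨_, fun t => ⟨_, (hres t).1, (hres t).2 ▸ (s t).2⟩⟩

theorem exists_forall_res_eq_mem {α : Type*} {w : ℕ → α} [TopologicalSpace α]
    [DiscreteTopology α] {V : Set (ℕ → α)} (hV : V ∈ 𝓝 w) :
    ∃ n, ∀ w', PiNat.res w' n = PiNat.res w n → w' ∈ V := by
  obtain ⟨_, ⟨w₀, n, rfl⟩, hw, hsub⟩ :=
    (PiNat.isTopologicalBasis_cylinders fun _ => α).mem_nhds_iff.1 hV
  refine ⟨n, fun w' hw' => hsub ?_⟩
  rw [PiNat.cylinder_eq_res] at hw ⊢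
  exact hw'.trans hw

theorem isClosed_setOf_res_eq {α : Type*} [TopologicalSpace α] [T1Space α] (u : List α) :
    IsClosed {w : ℕ → α | PiNat.res w u.length = u} := by
  induction u with
  | nil => simp
  | cons i u ih =>
    have hi : IsClosed ((fun w : ℕ → α => w u.length) ⁻¹' {i}) :=
      isClosed_singleton.preimage (continuous_apply _)
    convert hi.inter ih using 1
    ext w
    simp

theorem exists_forall_inter_eq_of_countable_image {X Z : Type*} [TopologicalSpace X] [PolishSpace X]
    [TopologicalSpace Z] [T1Space Z] {f : X → Z} (hf : Continuous f) {K : Set X} (hK : IsClosed K)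
    (hne : K.Nonempty) (hcount : (f '' K).Countable) :
    ∃ x ∈ K, ∃ V ∈ 𝓝 x, ∀ y ∈ V ∩ K, f y = f x := by
  have : PolishSpace K := hK.polishSpace
  have : Nonempty K := hne.to_subtype
  have : Countable (f '' K) := hcount
  obtain ⟨z, x, hx⟩ := nonempty_interior_of_iUnion_of_closed
    (f := fun z : f '' K => {x : K | f x = z})
    (fun z => (isClosed_singleton (x := (z : Z))).preimage (hf.comp continuous_subtype_val))
    (eq_univ_of_forall fun x => mem_iUnion.2 ⟨⟨f x, mem_image_of_mem f x.2⟩, rfl⟩)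
  rw [mem_interior_iff_mem_nhds, nhds_subtype, mem_comap] at hx
  obtain ⟨V, hV, hVz⟩ := hx
  have hxV : (x : X) ∈ V := mem_of_mem_nhds hV
  exact ⟨x, x.2, V, hV, fun y hy => (@hVz ⟨y, hy.2⟩ hy.1).trans (@hVz x hxV).symm⟩

theorem analyticSet_inter {X : Type*} [TopologicalSpace X] [T2Space X] {s t : Set X}
    (hs : AnalyticSet s) (ht : AnalyticSet t) : AnalyticSet (s ∩ t) := by
  rw [inter_eq_iInter]
  exact AnalyticSet.iInter (Bool.forall_bool.2 ⟨ht, hs⟩)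

theorem exists_append_singleton_prefix_of_ne {σ : Type*} {p q : List σ}
    (hlen : p.length = q.length) (hne : p ≠ q) :
    ∃ c i j, i ≠ j ∧ (c ++ [i]) <+: p ∧ (c ++ [j]) <+: q := by
  induction p generalizing q with
  | nil => exact absurd (List.length_eq_zero_iff.1 hlen.symm).symm hne
  | cons a p ih =>
    obtain _ | ⟨b, q⟩ := q
    · simp at hlen
    by_cases hab : a = b
    · subst hab
      obtain ⟨c, i, j, hij, hp, hq⟩ := ih (by simpa using hlen) (by simpa using hne)
      exact ⟨a :: c, i, j, hij, by simpa using hp, by simpa using hq⟩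
    · exact ⟨[], a, b, hab, by simp, by simp⟩

theorem eq_of_append_singleton_prefix {σ : Type*} {c y : List σ} {i j : σ}
    (hi : (c ++ [i]) <+: y) (hj : (c ++ [j]) <+: y) : i = j := by
  have h := (List.prefix_of_prefix_length_le hi hj (by simp)).eq_of_length (by simp)
  simpa using h

theorem exists_append_singleton_prefix_of_length_lt {σ : Type*} {x y : List σ} (h : x <+: y)
    (hlt : x.length < y.length) : ∃ i, (x ++ [i]) <+: y := by
  obtain ⟨_ | ⟨i, t⟩, rfl⟩ := h
  · simp at hlt
  · exact ⟨i, t, by simp⟩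

theorem exists_append_of_le_length {σ : Type*} {n : ℕ} {x : List σ} (h : n ≤ x.length) :
    ∃ v z, v.length = n ∧ x = v ++ z :=
  ⟨x.take n, x.drop n, by simpa using h, (List.take_append_drop n x).symm⟩

/-- Self-embeddings of the tree `σ^{<ℕ}` of finite words (as lists) which send levels into levels
and the `i`-th immediate successor above the `i`-th immediate successor. Their ranges are the
strong subtrees, and composition corresponds to passing to a further strong subtree. -/
structure StrongEmbedding (σ : Type*) where
  toFun : List σ → List σ
  length_congr' : ∀ x y, x.length = y.length → (toFun x).length = (toFun y).length
  append_singleton_prefix' : ∀ x i, (toFun x ++ [i]) <+: toFun (x ++ [i])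

namespace StrongEmbedding

variable {σ : Type*}

instance : FunLike (StrongEmbedding σ) (List σ) (List σ) where
  coe := toFun
  coe_injective := by rintro ⟨⟩ ⟨⟩ rfl; rfl

@[ext] theorem ext {α β : StrongEmbedding σ} (h : ∀ x, α x = β x) : α = β := DFunLike.ext _ _ h

@[simp] theorem coe_mk (f : List σ → List σ) (h₁ h₂) : ⇑(⟨f, h₁, h₂⟩ : StrongEmbedding σ) = f :=
  rfl

theorem length_congr (α : StrongEmbedding σ) {x y : List σ} (h : x.length = y.length) :
    (α x).length = (α y).length := α.length_congr' x y h

theorem append_singleton_prefix_apply (α : StrongEmbedding σ) (x : List σ) (i : σ) :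
    (α x ++ [i]) <+: α (x ++ [i]) := α.append_singleton_prefix' x i

theorem append_singleton_prefix (α : StrongEmbedding σ) {x y : List σ} {i : σ}
    (h : (x ++ [i]) <+: y) : (α x ++ [i]) <+: α y := by
  obtain ⟨t, rfl⟩ := h
  induction t using List.reverseRecOn with
  | nil => simpa using α.append_singleton_prefix_apply x i
  | append_singleton t j ih =>
    rw [← List.append_assoc]
    exact ih.trans ((List.prefix_append _ _).trans (α.append_singleton_prefix_apply _ j))

theorem prefix_mono (α : StrongEmbedding σ) {x y : List σ} (h : x <+: y) : α x <+: α y := by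
  obtain ⟨_ | ⟨i, t⟩, rfl⟩ := h
  · simp
  · exact (List.prefix_append _ _).trans (α.append_singleton_prefix (i := i) ⟨t, by simp⟩)

instance : One (StrongEmbedding σ) := ⟨⟨id, fun _ _ h => h, fun _ _ => List.prefix_rfl⟩⟩

instance : Mul (StrongEmbedding σ) :=
  ⟨fun α β => ⟨α ∘ β, fun _ _ h => α.length_congr (β.length_congr h),
    fun x i => α.append_singleton_prefix (β.append_singleton_prefix_apply x i)⟩⟩

@[simp] theorem one_apply (x : List σ) : (1 : StrongEmbedding σ) x = x := rfl

@[simp] theorem mul_apply (α β : StrongEmbedding σ) (x : List σ) : (α * β) x = α (β x) := rfl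

instance : Monoid (StrongEmbedding σ) where
  mul_assoc _ _ _ := rfl
  one_mul _ := rfl
  mul_one _ := rfl

/-- The submonoid of embeddings that are the identity on the first `n` levels; right translations
by it move inside a basic Ellentuck neighbourhood of depth `n`. -/
def fixing (n : ℕ) : Submonoid (StrongEmbedding σ) where
  carrier := {γ | ∀ x : List σ, x.length < n → γ x = x}
  one_mem' _ _ := rfl
  mul_mem' ha hb x hx := by rw [mul_apply, hb x hx, ha x hx]

theorem fixing_antitone : Antitone (fixing : ℕ → Submonoid (StrongEmbedding σ)) :=
  fun _ _ h _ hγ x hx => hγ x (hx.trans_le h)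

section Level

variable [Inhabited σ]

/-- The common length of the images of the words of length `n`. -/
def level (α : StrongEmbedding σ) (n : ℕ) : ℕ := (α (List.replicate n default)).length

theorem length_apply (α : StrongEmbedding σ) (x : List σ) : (α x).length = α.level x.length :=
  α.length_congr (by simp)

theorem level_strictMono (α : StrongEmbedding σ) : StrictMono α.level := by
  refine strictMono_nat_of_lt_succ fun n => ?_
  have h := (α.append_singleton_prefix_apply (List.replicate n default) default).length_le
  simpa [length_apply] using h

theorem level_mul (α β : StrongEmbedding σ) (i : ℕ) : (α * β).level i = α.level (β.level i) :=
  α.length_apply _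

theorem length_le_length_apply (α : StrongEmbedding σ) (x : List σ) : x.length ≤ (α x).length :=
  (α.level_strictMono.le_apply).trans_eq (α.length_apply x).symm

theorem length_apply_lt_length_apply (α : StrongEmbedding σ) {x y : List σ} :
    (α x).length < (α y).length ↔ x.length < y.length := by
  rw [length_apply, length_apply, α.level_strictMono.lt_iff_lt]

theorem length_apply_eq_length_apply (α : StrongEmbedding σ) {x y : List σ} :
    (α x).length = (α y).length ↔ x.length = y.length := by
  rw [length_apply, length_apply, α.level_strictMono.injective.eq_iff]

protected theorem injective (α : StrongEmbedding σ) : Function.Injective α := by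
  intro x y h
  by_contra hne
  obtain ⟨c, i, j, hij, hx, hy⟩ := exists_append_singleton_prefix_of_ne
    (α.length_apply_eq_length_apply.1 (congrArg _ h)) hne
  exact hij (eq_of_append_singleton_prefix (α.append_singleton_prefix hx)
    (h ▸ α.append_singleton_prefix hy))

instance : IsLeftCancelMul (StrongEmbedding σ) :=
  ⟨fun α _ _ h => ext fun x => α.injective (DFunLike.congr_fun h x)⟩

theorem append_singleton_prefix_iff (α : StrongEmbedding σ) {x y : List σ} {i : σ} :
    (α x ++ [i]) <+: α y ↔ (x ++ [i]) <+: y := by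
  refine ⟨fun h => ?_, α.append_singleton_prefix⟩
  have hlt : x.length < y.length :=
    α.length_apply_lt_length_apply.1 (by simpa using h.length_le)
  have htake : (y.take x.length).length = x.length := by simp [hlt.le]
  have hx : y.take x.length = x := α.injective <|
    (List.prefix_of_prefix_length_le (α.prefix_mono (List.take_prefix _ _))
      ((List.prefix_append _ _).trans h) (α.length_congr htake).le).eq_of_length
      (α.length_congr htake)
  obtain ⟨j, hj⟩ := exists_append_singleton_prefix_of_length_lt (hx ▸ List.take_prefix _ _) hlt
  rwa [eq_of_append_singleton_prefix h (α.append_singleton_prefix hj)]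

theorem exists_eq_mul_of_range_subset {α β : StrongEmbedding σ} (h : range α ⊆ range β) :
    ∃ γ, α = β * γ := by
  choose γ hγ using fun x => h (mem_range_self x)
  refine ⟨⟨γ, fun x y hxy => ?_, fun x i => ?_⟩, ext fun x => (hγ x).symm⟩
  · rw [← β.length_apply_eq_length_apply, hγ, hγ, α.length_congr hxy]
  · rw [← β.append_singleton_prefix_iff, hγ, hγ]
    exact α.append_singleton_prefix_apply x i

theorem eq_one_of_length_le {γ : StrongEmbedding σ} (h : ∀ x, (γ x).length ≤ x.length) :
    γ = 1 := by
  ext1 x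
  have hlen (y) : (γ y).length = y.length := (h y).antisymm (γ.length_le_length_apply y)
  by_contra hne
  obtain ⟨c, i, j, hij, hγ, hx⟩ := exists_append_singleton_prefix_of_ne (hlen x) hne
  have hc : γ c = c := (List.prefix_of_prefix_length_le
    (γ.prefix_mono ((List.prefix_append _ _).trans hx)) ((List.prefix_append _ _).trans hγ)
    (hlen c).le).eq_of_length (hlen c)
  exact hij (eq_of_append_singleton_prefix hγ (by simpa [hc] using γ.append_singleton_prefix hx))

theorem eq_of_range_eq {α β : StrongEmbedding σ} (h : range α = range β) : α = β := by
  obtain ⟨γ, hγ⟩ := exists_eq_mul_of_range_subset h.subset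
  obtain ⟨δ, hδ⟩ := exists_eq_mul_of_range_subset h.superset
  have hγδ : δ * γ = 1 := mul_left_cancel (a := α) (by rw [← mul_assoc, ← hδ, ← hγ, mul_one])
  rw [hγ, eq_one_of_length_le (γ := γ) fun x => ?_, mul_one]
  simpa [← mul_apply, hγδ] using δ.length_le_length_apply (γ x)

end Level

/-! ### Traces -/

theorem take_of_mem_fixing {k : ℕ} {γ : StrongEmbedding σ} (h : γ ∈ fixing k) (y : List σ) :
    (γ y).take k = y.take k := by
  rcases lt_or_ge y.length k with hy | hy
  · rw [h y hy]
  obtain _ | k := k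
  · simp
  have hprefix : (y.take k ++ [y[k]]) <+: y := by
    rw [List.take_concat_get']; exact List.take_prefix _ _
  have hγ := γ.append_singleton_prefix hprefix
  rw [h _ (by simp), List.take_concat_get', List.prefix_iff_eq_take, List.length_take,
    min_eq_left hy] at hγ
  exact hγ.symm

/-- `α` and `β` look the same below height `k`: their finite traces, obtained by truncating all
values at length `k`, coincide. -/
def TraceEq (k : ℕ) (α β : StrongEmbedding σ) : Prop := ∀ x, (α x).take k = (β x).take k

namespace TraceEq

variable {k m : ℕ} {α β γ : StrongEmbedding σ}

@[refl] theorem refl (k : ℕ) (α : StrongEmbedding σ) : TraceEq k α α := fun _ => rfl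

@[symm] theorem symm (h : TraceEq k α β) : TraceEq k β α := fun x => (h x).symm

@[trans] theorem trans (h : TraceEq k α β) (h' : TraceEq k β γ) : TraceEq k α γ :=
  fun x => (h x).trans (h' x)

theorem anti (hkm : k ≤ m) (h : TraceEq m α β) : TraceEq k α β := fun x => by
  simpa [List.take_take, hkm] using congrArg (List.take k) (h x)

theorem mul_left_of_mem_fixing (h : γ ∈ fixing k) (α : StrongEmbedding σ) :
    TraceEq k (γ * α) α := fun x => take_of_mem_fixing h (α x)

theorem length_lt_iff (h : TraceEq k α β) (x : List σ) :
    (α x).length < k ↔ (β x).length < k := by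
  have := congrArg List.length (h x)
  simp only [List.length_take] at this
  omega

theorem apply_eq (h : TraceEq k α β) {x : List σ} (hx : (α x).length < k) : β x = α x := by
  rw [← List.take_of_length_le ((h.length_lt_iff x).1 hx).le, ← h, List.take_of_length_le hx.le]

end TraceEq

/-- The map which is the identity below level `k` and is given by `h a` on the tails above each
word `a` of length `k`. -/
def graft (k : ℕ) (h : List σ → List σ → List σ)
    (hlen : ∀ a b x y, x.length = y.length → (h a x).length = (h b y).length)
    (hstep : ∀ a x i, (h a x ++ [i]) <+: h a (x ++ [i])) : StrongEmbedding σ where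
  toFun x := if x.length < k then x else x.take k ++ h (x.take k) (x.drop k)
  length_congr' x y hxy := by
    split_ifs <;> simp [hxy, hlen _ (y.take k) (x.drop k) (y.drop k) (by simp [hxy])] <;> omega
  append_singleton_prefix' x i := by
    have hlength : (x ++ [i]).length = x.length + 1 := by simp
    rcases lt_trichotomy (x.length + 1) k with hx | hx | hx
    · rw [if_pos (by omega), if_pos (by omega)]
    · rw [if_pos (by omega), if_neg (by omega), List.take_of_length_le (l := x ++ [i]) (by omega)]
      exact List.prefix_append _ _
    · rw [if_neg (by omega), if_neg (by omega), List.take_append_of_le_length (by omega),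
        List.drop_append_of_le_length (by omega), List.append_assoc]
      exact (List.prefix_append_right_inj _).2 (hstep _ _ i)

section Graft

variable {k : ℕ} {h : List σ → List σ → List σ}
  {hlen : ∀ a b x y, x.length = y.length → (h a x).length = (h b y).length}
  {hstep : ∀ a x i, (h a x ++ [i]) <+: h a (x ++ [i])}

theorem graft_mem_fixing : graft k h hlen hstep ∈ fixing k := fun _ hx => if_pos hx

theorem graft_append {a : List σ} (ha : a.length = k) (z : List σ) :
    graft k h hlen hstep (a ++ z) = a ++ h a z := by
  subst ha; simp [graft]

end Graft

section Saturation

variable [Inhabited σ]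

theorem take_apply_take (α : StrongEmbedding σ) {m n : ℕ} (h : m ≤ α.level n) (x : List σ) :
    (α (x.take n)).take m = (α x).take m := by
  rcases lt_or_ge x.length n with hx | hx
  · rw [List.take_of_length_le hx.le]
  · obtain ⟨t, ht⟩ := α.prefix_mono (List.take_prefix n x)
    rw [← ht, List.take_append_of_le_length (by rw [length_apply]; simpa [hx] using h)]

theorem le_level (α : StrongEmbedding σ) (n : ℕ) : n ≤ α.level n := α.level_strictMono.le_apply

/-- The number of levels of the range of `α` which lie below height `m`. -/
def levelsBelow (m : ℕ) (α : StrongEmbedding σ) : ℕ :=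
  Nat.find (p := fun k => m ≤ α.level k) ⟨m, α.le_level m⟩

theorem le_level_levelsBelow (m : ℕ) (α : StrongEmbedding σ) : m ≤ α.level (levelsBelow m α) := by
  exact Nat.find_spec (p := fun k => m ≤ α.level k) _

theorem lt_levelsBelow_iff {m k : ℕ} {α : StrongEmbedding σ} :
    k < levelsBelow m α ↔ α.level k < m := by
  refine ⟨fun h => not_le.1 (Nat.find_min (p := fun k => m ≤ α.level k) _ h), fun h => ?_⟩
  exact α.level_strictMono.lt_iff_lt.1 (h.trans_le (le_level_levelsBelow m α))

theorem length_lt_levelsBelow_iff {m : ℕ} {α : StrongEmbedding σ} {x : List σ} :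
    x.length < levelsBelow m α ↔ (α x).length < m := by
  rw [lt_levelsBelow_iff, length_apply]

theorem levelsBelow_eq_of_forall {m k : ℕ} {α : StrongEmbedding σ}
    (h : ∀ j, j < k ↔ α.level j < m) : levelsBelow m α = k :=
  eq_of_forall_lt_iff fun j => by rw [lt_levelsBelow_iff, h]

theorem TraceEq.levelsBelow_eq {m : ℕ} {α β : StrongEmbedding σ} (h : TraceEq m α β) :
    levelsBelow m α = levelsBelow m β :=
  levelsBelow_eq_of_forall fun j => by rw [lt_levelsBelow_iff]; exact (h.length_lt_iff _).symm

/-- The largest embedding with the same trace as `α` below height `m`: it agrees with `α` on the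
levels below `m`, and above height `m` it takes all words compatible with the trace. -/
def saturate (m : ℕ) (α : StrongEmbedding σ) : StrongEmbedding σ where
  toFun x := if x.length < levelsBelow m α then α x else
    (α (x.take (levelsBelow m α))).take m ++ x.drop (levelsBelow m α)
  length_congr' x y h := by
    split_ifs <;> simp [h, α.length_congr h,
      α.length_congr (x := x.take (levelsBelow m α)) (y := y.take (levelsBelow m α)) (by simp [h])]
      <;> omega
  append_singleton_prefix' x i := by
    have hlength : (x ++ [i]).length = x.length + 1 := by simp
    rcases lt_trichotomy (x.length + 1) (levelsBelow m α) with h | h | h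
    · rw [if_pos (by omega), if_pos (by omega)]
      exact α.append_singleton_prefix_apply x i
    · rw [if_pos (by omega), if_neg (by omega), List.take_of_length_le (l := x ++ [i]) (by omega),
        List.drop_of_length_le (by omega), List.append_nil, List.prefix_take_iff]
      have := length_lt_levelsBelow_iff.1 (by omega : x.length < levelsBelow m α)
      exact ⟨α.append_singleton_prefix_apply x i, by simp; omega⟩
    · rw [if_neg (by omega), if_neg (by omega), List.take_append_of_le_length (by omega),
        List.drop_append_of_le_length (by omega), List.append_assoc]

theorem saturate_apply_of_lt {m : ℕ} {α : StrongEmbedding σ} {x : List σ}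
    (h : x.length < levelsBelow m α) : saturate m α x = α x := if_pos h

theorem saturate_apply_append {m : ℕ} {α : StrongEmbedding σ} {v : List σ}
    (hv : v.length = levelsBelow m α) (z : List σ) :
    saturate m α (v ++ z) = (α v).take m ++ z := by
  simp [saturate, ← hv]

theorem length_take_apply {m : ℕ} {α : StrongEmbedding σ} {x : List σ}
    (h : levelsBelow m α ≤ x.length) : ((α x).take m).length = m := by
  rw [List.length_take,
    min_eq_left (not_lt.1 fun hlt => h.not_gt (length_lt_levelsBelow_iff.2 hlt))]

theorem saturate_traceEq (m : ℕ) (α : StrongEmbedding σ) : TraceEq m (saturate m α) α := by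
  intro x
  rcases lt_or_ge x.length (levelsBelow m α) with h | h
  · rw [saturate_apply_of_lt h]
  · obtain ⟨v, z, hv, rfl⟩ := exists_append_of_le_length h
    rw [saturate_apply_append hv, List.take_append_of_le_length (length_take_apply hv.ge).ge,
      List.take_take, min_self, ← take_apply_take α (le_level_levelsBelow m α) (v ++ z),
      List.take_append_of_le_length hv.ge, List.take_of_length_le hv.le]

theorem TraceEq.exists_eq_saturate_mul {m : ℕ} {α β : StrongEmbedding σ} (h : TraceEq m β α) :
    ∃ ε ∈ fixing (levelsBelow m α), β = saturate m α * ε := by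
  have hsat {x} (hx : x.length < levelsBelow m α) : saturate m α x = β x := by
    rw [saturate_apply_of_lt hx, h.symm.apply_eq (length_lt_levelsBelow_iff.1 hx)]
  obtain ⟨ε, rfl⟩ : ∃ ε, β = saturate m α * ε := by
    refine exists_eq_mul_of_range_subset ?_
    rintro _ ⟨x, rfl⟩
    rcases lt_or_ge x.length (levelsBelow m α) with hx | hx
    · exact ⟨x, hsat hx⟩
    · obtain ⟨v, z, hv, rfl⟩ := exists_append_of_le_length hx
      refine ⟨v ++ (β (v ++ z)).drop m, ?_⟩
      have hpre := α.take_apply_take (le_level_levelsBelow m α) (v ++ z)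
      rw [List.take_append_of_le_length hv.ge, List.take_of_length_le hv.le, ← h (v ++ z)] at hpre
      rw [saturate_apply_append hv, hpre, List.take_append_drop]
  exact ⟨ε, fun x hx => (saturate m α).injective (hsat hx).symm, rfl⟩

theorem exists_mul_saturate_eq {m : ℕ} {α ε : StrongEmbedding σ}
    (hε : ε ∈ fixing (levelsBelow m α)) :
    ∃ δ ∈ fixing m, δ * saturate m α = saturate m α * ε := by
  have hpick (p : List σ) : ∃ v, v.length = levelsBelow m α ∧
      ∀ x, x.length = levelsBelow m α → (α x).take m = p → v = x := by
    by_cases hp : ∃ v, v.length = levelsBelow m α ∧ (α v).take m = p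
    · obtain ⟨v, hv, rfl⟩ := hp
      refine ⟨v, hv, fun x hx hxv => (saturate m α).injective ?_⟩
      have hv' := saturate_apply_append hv []
      have hx' := saturate_apply_append hx []
      rwa [← hxv, ← hx', List.append_nil, List.append_nil] at hv'
    · exact ⟨List.replicate (levelsBelow m α) default, by simp,
        fun x hx hxp => absurd ⟨x, hx, hxp⟩ hp⟩
  choose pick hlen hpick using hpick
  refine ⟨graft m (fun p z => (ε (pick p ++ z)).drop (levelsBelow m α)) ?_ ?_,
    graft_mem_fixing, ext fun x => ?_⟩
  · intro p q y z hyz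
    simp [ε.length_congr (x := pick p ++ y) (y := pick q ++ z) (by simp [hlen, hyz])]
  · intro p z i
    have hle : levelsBelow m α ≤ (ε (pick p ++ z)).length :=
      le_trans (by simp [hlen]) (ε.length_le_length_apply _)
    have := (ε.append_singleton_prefix_apply (pick p ++ z) i).drop (levelsBelow m α)
    rwa [List.drop_append_of_le_length hle, List.append_assoc] at this
  simp only [mul_apply]
  rcases lt_or_ge x.length (levelsBelow m α) with hx | hx
  · rw [hε x hx, saturate_apply_of_lt hx, graft_mem_fixing _ (length_lt_levelsBelow_iff.1 hx)]
  · obtain ⟨v, z, hv, rfl⟩ := exists_append_of_le_length hx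
    have hεv : (ε (v ++ z)).take (levelsBelow m α) = v := by
      rw [take_of_mem_fixing hε, List.take_append_of_le_length hv.ge,
        List.take_of_length_le hv.le]
    rw [saturate_apply_append hv, graft_append (length_take_apply hv.ge),
      hpick _ v hv rfl, ← saturate_apply_append hv]
    nth_rw 1 [← hεv]
    rw [List.take_append_drop]

theorem TraceEq.exists_eq_mul_saturate {m : ℕ} {α β : StrongEmbedding σ} (h : TraceEq m β α) :
    ∃ δ ∈ fixing m, β = δ * saturate m α := by
  obtain ⟨ε, hε, rfl⟩ := h.exists_eq_saturate_mul
  obtain ⟨δ, hδ, h⟩ := exists_mul_saturate_eq hε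
  exact ⟨δ, hδ, h.symm⟩

theorem saturate_mul_traceEq {m : ℕ} {α ε : StrongEmbedding σ}
    (hε : ε ∈ fixing (levelsBelow m α)) : TraceEq m (saturate m α * ε) α := by
  obtain ⟨δ, hδ, h⟩ := exists_mul_saturate_eq hε
  exact h ▸ (TraceEq.mul_left_of_mem_fixing hδ _).trans (saturate_traceEq m α)

theorem exists_finite_traceEq_net [Finite σ] (m : ℕ) :
    ∃ T : Set (StrongEmbedding σ), T.Finite ∧ ∀ α, ∃ τ ∈ T, TraceEq m α τ := by
  let Words := {l : List σ // l.length ≤ m}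
  have : Finite Words := List.finite_length_le σ m
  let trace (α : StrongEmbedding σ) (x : Words) : Words := ⟨(α x).take m, by simp⟩
  refine ⟨range fun t : range trace => t.2.choose, finite_range _, fun α => ?_⟩
  refine ⟨_, mem_range_self ⟨trace α, mem_range_self α⟩, fun x => ?_⟩
  have h := congrArg Subtype.val (congrFun (mem_range_self (f := trace) α).choose_spec
    ⟨x.take m, by simp⟩)
  rw [← α.take_apply_take (α.le_level m), ← take_apply_take _ (le_level _ m) x]
  exact h.symm

/-- The least height at which the first `k` levels of `α` are visible. -/
def cutHeight (α : StrongEmbedding σ) : ℕ → ℕ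
  | 0 => 0
  | k + 1 => α.level k + 1

theorem level_lt_cutHeight_iff {α : StrongEmbedding σ} {j k : ℕ} :
    α.level j < α.cutHeight k ↔ j < k := by
  cases k <;> simp [cutHeight, α.level_strictMono.le_iff_le]

theorem cutHeight_le_level (α : StrongEmbedding σ) (k : ℕ) : α.cutHeight k ≤ α.level k :=
  not_lt.1 fun h => lt_irrefl _ (level_lt_cutHeight_iff.1 h)

theorem le_cutHeight (α : StrongEmbedding σ) : ∀ k, k ≤ α.cutHeight k
  | 0 => le_rfl
  | k + 1 => Nat.succ_le_succ (α.le_level k)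

theorem levelsBelow_cutHeight_mul (γ α : StrongEmbedding σ) (j : ℕ) :
    levelsBelow (γ.cutHeight j) (γ * α) = levelsBelow j α :=
  levelsBelow_eq_of_forall fun i => by
    rw [lt_levelsBelow_iff, level_mul, level_lt_cutHeight_iff]

theorem levelsBelow_cutHeight (α : StrongEmbedding σ) (j : ℕ) :
    levelsBelow (α.cutHeight j) α = j :=
  levelsBelow_eq_of_forall fun _ => level_lt_cutHeight_iff.symm

theorem cutHeight_mul_of_mem_fixing {j : ℕ} {δ : StrongEmbedding σ} (hδ : δ ∈ fixing j)
    (γ : StrongEmbedding σ) : (γ * δ).cutHeight j = γ.cutHeight j := by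
  obtain _ | j := j
  · rfl
  · simp [cutHeight, level, hδ _ (show (List.replicate j (default : σ)).length < j + 1 by simp)]

theorem TraceEq.cutHeight_mul {j : ℕ} {α β : StrongEmbedding σ} (h : TraceEq j α β)
    (γ : StrongEmbedding σ) : TraceEq (γ.cutHeight j) (γ * α) (γ * β) := fun x => by
  rw [mul_apply, mul_apply, ← γ.take_apply_take (γ.cutHeight_le_level j), h x,
    γ.take_apply_take (γ.cutHeight_le_level j)]

theorem exists_mul_eq_mul_mul_of_traceEq {j : ℕ} {γ δ τ : StrongEmbedding σ} (hδ : δ ∈ fixing j) :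
    ∃ γ' ∈ fixing (γ.cutHeight j), ∀ α, TraceEq (γ.cutHeight j) α (γ * τ) →
      ∃ τ', TraceEq j τ' τ ∧ γ' * α = γ * δ * τ' := by
  have htrace : TraceEq (γ.cutHeight j) (γ * δ * saturate j τ) (γ * τ) :=
    mul_assoc γ δ _ ▸ TraceEq.cutHeight_mul
      ((TraceEq.mul_left_of_mem_fixing hδ _).trans (saturate_traceEq j τ)) γ
  obtain ⟨γ', hγ', hsat⟩ := htrace.exists_eq_mul_saturate
  refine ⟨γ', hγ', fun α hα => ?_⟩
  obtain ⟨ε, hε, rfl⟩ := hα.exists_eq_saturate_mul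
  rw [levelsBelow_cutHeight_mul] at hε
  exact ⟨saturate j τ * ε, saturate_mul_traceEq hε, by rw [← mul_assoc, ← mul_assoc, hsat]⟩

end Saturation

/-! ### Infinite products and fusion -/

theorem prod_range_apply {δ : ℕ → StrongEmbedding σ} (hδ : ∀ j, δ j ∈ fixing j) {x : List σ}
    {j : ℕ} (hj : x.length < j) :
    ((List.range j).map δ).prod x = ((List.range (x.length + 1)).map δ).prod x := by
  induction j, hj using Nat.le_induction with
  | base => rfl
  | succ j hj ih => rw [List.prod_range_succ, mul_apply, hδ j x hj, ih]

/-- The infinite composition `δ 0 * δ 1 * δ 2 * ⋯`; as `δ j` fixes words shorter than `j`, only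
the first `x.length + 1` factors contribute to its value at `x`. -/
def infiniteProduct (δ : ℕ → StrongEmbedding σ) (hδ : ∀ j, δ j ∈ fixing j) :
    StrongEmbedding σ where
  toFun x := ((List.range (x.length + 1)).map δ).prod x
  length_congr' x y h := by rw [h]; exact length_congr _ h
  append_singleton_prefix' x i := by
    rw [← prod_range_apply hδ (j := (x ++ [i]).length + 1) (by simp)]
    exact append_singleton_prefix_apply _ x i

theorem infiniteProduct_mem_fixing {δ : ℕ → StrongEmbedding σ} {hδ : ∀ j, δ j ∈ fixing j} {n : ℕ}
    (h : ∀ j, δ j ∈ fixing n) : infiniteProduct δ hδ ∈ fixing n := fun x hx =>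
  Submonoid.list_prod_mem (fixing n) (l := (List.range (x.length + 1)).map δ)
    (by simpa using fun j _ => h j) x hx

theorem infiniteProduct_eq_mul {δ : ℕ → StrongEmbedding σ} (hδ : ∀ j, δ j ∈ fixing j) :
    infiniteProduct δ hδ = δ 0 * infiniteProduct (fun j => δ (j + 1))
      fun j => fixing_antitone j.le_succ (hδ (j + 1)) := by
  ext1 x
  change ((List.range (x.length + 1)).map δ).prod x =
    δ 0 (((List.range (x.length + 1)).map fun j => δ (j + 1)).prod x)
  rw [List.prod_range_succ', List.prod_range_succ, mul_apply, mul_apply,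
    hδ (x.length + 1) x x.length.lt_succ_self]

theorem exists_infinite_factorization {n : ℕ} {δ : ℕ → StrongEmbedding σ}
    (hδ : ∀ i, δ i ∈ fixing (n + i)) :
    ∃ γ : ℕ → StrongEmbedding σ, ∀ i, γ i ∈ fixing (n + i) ∧ γ i = δ i * γ (i + 1) := by
  have htail (i j : ℕ) : δ (i + j) ∈ fixing j := fixing_antitone (by omega) (hδ (i + j))
  refine ⟨fun i => infiniteProduct (fun j => δ (i + j)) (htail i), fun i => ⟨?_, ?_⟩⟩
  · exact infiniteProduct_mem_fixing fun j => fixing_antitone (by omega) (hδ (i + j))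
  · dsimp only
    rw [infiniteProduct_eq_mul]
    congr! 4 with j
    omega

/-- The largest subset of `X` that is closed under right translations by `fixing k`. -/
def hereditary (k : ℕ) (X : Set (StrongEmbedding σ)) : Set (StrongEmbedding σ) :=
  {B | ∀ γ ∈ fixing k, B * γ ∈ X}

theorem hereditary_subset (k : ℕ) (X : Set (StrongEmbedding σ)) : hereditary k X ⊆ X :=
  fun _ hB => hB 1 (one_mem _)

theorem mul_mem_hereditary {j k : ℕ} {X : Set (StrongEmbedding σ)} {B γ : StrongEmbedding σ}
    (hB : B ∈ hereditary k X) (hγ : γ ∈ fixing j) (hkj : k ≤ j) : B * γ ∈ hereditary k X :=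
  fun δ hδ => mul_assoc B γ δ ▸ hB _ (mul_mem (fixing_antitone hkj hγ) hδ)

/-- The embeddings all of whose right translations by `fixing k` agree on whether they belong
to `X`. -/
def decided (k : ℕ) (X : Set (StrongEmbedding σ)) : Set (StrongEmbedding σ) :=
  hereditary k X ∪ hereditary k Xᶜ

/-- Sets closed under right translations by `fixing k` and met by each coset `B * fixing k`. -/
structure IsDenseOpen (k : ℕ) (D : Set (StrongEmbedding σ)) : Prop where
  mul_mem : ∀ ⦃B⦄, B ∈ D → ∀ ⦃γ⦄, γ ∈ fixing k → B * γ ∈ D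
  exists_mul_mem : ∀ B, ∃ γ ∈ fixing k, B * γ ∈ D

namespace IsDenseOpen

variable {k : ℕ} {D D' : Set (StrongEmbedding σ)}

protected theorem univ : IsDenseOpen k (univ : Set (StrongEmbedding σ)) :=
  ⟨fun _ _ _ _ => mem_univ _, fun _ => ⟨1, one_mem _, mem_univ _⟩⟩

protected theorem inter (h : IsDenseOpen k D) (h' : IsDenseOpen k D') :
    IsDenseOpen k (D ∩ D') := by
  refine ⟨fun B hB γ hγ => ⟨h.mul_mem hB.1 hγ, h'.mul_mem hB.2 hγ⟩, fun B => ?_⟩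
  obtain ⟨γ, hγ, hBγ⟩ := h.exists_mul_mem B
  obtain ⟨γ', hγ', hBγ'⟩ := h'.exists_mul_mem (B * γ)
  exact ⟨γ * γ', Submonoid.mul_mem _ hγ hγ', by
    rw [← mul_assoc]; exact ⟨h.mul_mem hBγ hγ', hBγ'⟩⟩

theorem setOf_forall_mem {ι : Type*} {s : Set ι} (hs : s.Finite) {D : ι → Set (StrongEmbedding σ)}
    (h : ∀ i ∈ s, IsDenseOpen k (D i)) : IsDenseOpen k {B | ∀ i ∈ s, B ∈ D i} := by
  induction s, hs using Set.Finite.induction_on with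
  | empty => simpa using IsDenseOpen.univ
  | insert _ _ ih =>
    simpa only [forall_mem_insert] using!
      (h _ (mem_insert _ _)).inter (ih fun i hi => h i (mem_insert_of_mem _ hi))

theorem union_hereditary_compl (h : ∀ B ∈ D, ∀ γ ∈ fixing k, B * γ ∈ D) :
    IsDenseOpen k (D ∪ hereditary k Dᶜ) := by
  refine ⟨?_, fun B => ?_⟩
  · rintro B (hB | hB) γ hγ
    · exact Or.inl (h B hB γ hγ)
    · exact Or.inr (mul_mem_hereditary hB hγ le_rfl)
  · by_cases hB : ∃ γ ∈ fixing k, B * γ ∈ D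
    · obtain ⟨γ, hγ, hBγ⟩ := hB
      exact ⟨γ, hγ, Or.inl hBγ⟩
    · push Not at hB
      exact ⟨1, one_mem _, Or.inr (by rwa [mul_one])⟩

theorem decided_of_exists {X : Set (StrongEmbedding σ)}
    (h : ∀ B, ∃ γ ∈ fixing k, B * γ ∈ decided k X) : IsDenseOpen k (decided k X) :=
  ⟨fun _ hB _ hγ => hB.imp (mul_mem_hereditary · hγ le_rfl) (mul_mem_hereditary · hγ le_rfl), h⟩

end IsDenseOpen

theorem exists_forall_mul_mem_of_isDenseOpen {n : ℕ} {D : ℕ → Set (StrongEmbedding σ)}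
    (h : ∀ m ≥ n, IsDenseOpen m (D m)) (B : StrongEmbedding σ) :
    ∃ γ ∈ fixing n, ∀ m ≥ n, B * γ ∈ D m := by
  choose δ hδ hδD using fun i => (h (n + i) (Nat.le_add_right n i)).exists_mul_mem
  let C : ℕ → StrongEmbedding σ := fun i => Nat.rec B (fun i C => C * δ i C) i
  obtain ⟨γ, hγ⟩ := exists_infinite_factorization fun i => hδ i (C i)
  have hC : ∀ i, C i * γ i = B * γ 0 := fun i => by
    induction i with
    | zero => rfl
    | succ i ih => rw [← ih, (hγ i).2, ← mul_assoc]
  refine ⟨γ 0, (hγ 0).1, fun m hm => ?_⟩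
  obtain ⟨i, rfl⟩ := Nat.exists_eq_add_of_le hm
  rw [← hC i, (hγ i).2, ← mul_assoc]
  exact (h _ hm).mul_mem (hδD i (C i)) (fixing_antitone (by omega) (hγ (i + 1)).1)

section Fusion

variable [Inhabited σ]

theorem IsDenseOpen.setOf_forall_traceEq_mul_mem {m : ℕ} {τ : StrongEmbedding σ}
    {D : Set (StrongEmbedding σ)} (h : IsDenseOpen (levelsBelow m τ) D) :
    IsDenseOpen m {C | ∀ α, TraceEq m α τ → C * α ∈ D} := by
  refine ⟨fun C hC δ hδ α hα => ?_, fun C => ?_⟩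
  · rw [mul_assoc]
    exact hC _ ((TraceEq.mul_left_of_mem_fixing hδ α).trans hα)
  · obtain ⟨ε, hε, hCε⟩ := h.exists_mul_mem (C * saturate m τ)
    obtain ⟨δ, hδ, hδε⟩ := exists_mul_saturate_eq hε
    refine ⟨δ, hδ, fun α hα => ?_⟩
    obtain ⟨ε', hε', rfl⟩ := hα.exists_eq_saturate_mul
    rw [mul_assoc C, ← mul_assoc δ, hδε, ← mul_assoc, ← mul_assoc]
    exact h.mul_mem hCε hε'

theorem IsDenseOpen.setOf_mul_mem_levelsBelow [Finite σ] {n : ℕ} {D : ℕ → Set (StrongEmbedding σ)}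
    (h : ∀ k ≥ n, IsDenseOpen k (D k)) (m : ℕ) :
    IsDenseOpen m {C | ∀ α, n ≤ levelsBelow m α → C * α ∈ D (levelsBelow m α)} := by
  obtain ⟨T, hT, hnet⟩ := exists_finite_traceEq_net (σ := σ) m
  convert IsDenseOpen.setOf_forall_mem (hT.subset (sep_subset T fun τ => n ≤ levelsBelow m τ))
    fun τ hτ => (h _ hτ.2).setOf_forall_traceEq_mul_mem using 1
  ext C
  refine ⟨fun hC τ hτ α hα => hα.levelsBelow_eq ▸ hC α (hα.levelsBelow_eq ▸ hτ.2), ?_⟩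
  intro hC α hα
  obtain ⟨τ, hτ, hατ⟩ := hnet α
  rw [hατ.levelsBelow_eq] at hα ⊢
  exact hC τ ⟨hτ, hα⟩ α hατ

theorem exists_forall_mul_mul_mem_of_isDenseOpen [Finite σ] {n : ℕ}
    {D : ℕ → Set (StrongEmbedding σ)} (h : ∀ k ≥ n, IsDenseOpen k (D k)) (B : StrongEmbedding σ) :
    ∃ γ ∈ fixing n, ∀ α, ∀ k ≥ n, B * γ * α ∈ D k := by
  obtain ⟨γ, hγ, hBγ⟩ := exists_forall_mul_mem_of_isDenseOpen
    (fun m (_ : m ≥ n) => IsDenseOpen.setOf_mul_mem_levelsBelow h m) B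
  refine ⟨γ, hγ, fun α k hk => ?_⟩
  simpa [levelsBelow_cutHeight, hk] using hBγ _ (hk.trans (α.le_cutHeight k)) α

end Fusion

/-! ### The Halpern–Läuchli pigeonhole -/

section Pigeonhole

variable [Inhabited σ] {k : ℕ}

/-- The `x`-th coordinate of a letter of the alphabet `σ^(σ^k)`, for a word `x` of length `k`
(and a junk value for the other words). -/
def evalAt (x : List σ) (a : {x : List σ // x.length = k} → σ) : σ :=
  if h : x.length = k then a ⟨x, h⟩ else default

/-- The embedding fixing the levels below `k` and inserting at each word `x` of length `k` the
`x`-th coordinates of the word `w` over the alphabet `σ^(σ^k)`. -/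
def insertWord (w : List ({x : List σ // x.length = k} → σ)) : StrongEmbedding σ :=
  graft k (fun x t => w.map (evalAt x) ++ t) (by simp +contextual) (by simp)

theorem insertWord_mem_fixing (w : List ({x : List σ // x.length = k} → σ)) :
    insertWord w ∈ fixing k := graft_mem_fixing

theorem exists_eq_insertWord_mul {β : StrongEmbedding σ} (hβ : β ∈ fixing k)
    {w : List ({x : List σ // x.length = k} → σ)}
    (h : ∀ x : List σ, x.length = k → β x = x ++ w.map (evalAt x)) :
    ∃ ε ∈ fixing (k + 1), β = insertWord w * ε := by
  have hlt : ∀ x : List σ, x.length < k → insertWord w x = β x := fun x hx =>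
    (insertWord_mem_fixing w x hx).trans (hβ x hx).symm
  have happend : ∀ x t : List σ, x.length = k → insertWord w (x ++ t) = β x ++ t := by
    intro x t hx
    rw [h x hx, insertWord, graft_append hx, List.append_assoc]
  obtain ⟨ε, rfl⟩ : ∃ ε, β = insertWord w * ε := by
    refine exists_eq_mul_of_range_subset ?_
    rintro _ ⟨y, rfl⟩
    obtain hy | hy := lt_or_ge y.length k
    · exact ⟨y, hlt y hy⟩
    · obtain ⟨x, z, hx, rfl⟩ := exists_append_of_le_length hy
      obtain ⟨t, ht⟩ := β.prefix_mono (List.prefix_append x z)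
      exact ⟨x ++ t, (happend x t hx).trans ht⟩
  refine ⟨ε, fun x hx => (insertWord w).injective ?_, rfl⟩
  obtain hx | hx := (Nat.lt_succ_iff.1 hx).lt_or_eq
  · exact (hlt x hx).symm
  · simpa using (happend x [] hx).symm

theorem exists_forall_apply_eq_append_map_evalAt {α : StrongEmbedding σ} (hα : α ∈ fixing k) :
    ∃ s : List ({x : List σ // x.length = k} → σ),
      ∀ x : List σ, x.length = k → α x = x ++ s.map (evalAt x) := by
  refine ⟨(List.range (α.level k - k)).map fun i x => (α x.1).getD (k + i) default,
    fun x hx => ?_⟩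
  have htake : (α x).take k = x := by
    rw [take_of_mem_fixing hα, List.take_of_length_le hx.le]
  rw [← List.take_append_drop k (α x), htake]
  congr 1
  have hlen : (α x).length = α.level k := by rw [length_apply, hx]
  refine List.ext_getElem (by simp [hlen]) fun i hi _ => ?_
  simp only [List.length_drop] at hi
  simp [evalAt, hx, List.getElem?_eq_getElem (show k + i < (α x).length by omega)]

theorem exists_forall_mul_eq_of_colouring [Finite σ] {κ : Type*} [Finite κ]
    {c : StrongEmbedding σ → κ}
    (hc : ∀ β ∈ fixing k, ∀ ε ∈ fixing (k + 1), c (β * ε) = c β) :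
    ∃ γ ∈ fixing k, ∃ i, ∀ α ∈ fixing k, c (γ * α) = i := by
  have : Finite {x : List σ // x.length = k} := List.finite_length_eq σ k
  obtain ⟨w, z, i, hi⟩ := carlson_simpson fun w : List ({x : List σ // x.length = k} → σ) =>
    c (insertWord w)
  let γ : StrongEmbedding σ := graft k
    (fun x t => w.map (evalAt x) ++ concatSubst (fun i => (z i).map (Option.map (evalAt x))) t)
    (fun x y s t hst => by simp [length_concatSubst, hst])
    (fun x t a => by simp [concatSubst_append_singleton])
  refine ⟨γ, graft_mem_fixing, i, fun α hα => ?_⟩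
  obtain ⟨s, hs⟩ := exists_forall_apply_eq_append_map_evalAt hα
  have hγα : ∀ x : List σ, x.length = k →
      (γ * α) x = x ++ (w ++ concatSubst z s).map (evalAt x) := by
    intro x hx
    rw [mul_apply, hs x hx, graft_append hx, List.map_append, map_concatSubst]
  obtain ⟨ε, hε, h⟩ := exists_eq_insertWord_mul (mul_mem graft_mem_fixing hα) hγα
  rw [h, hc _ (insertWord_mem_fixing _) ε hε, hi]

theorem isDenseOpen_hereditary_union_hereditary_hereditary_compl [Finite σ]
    {Q : Set (StrongEmbedding σ)} (hQ : ∀ B ∈ Q, ∀ ε ∈ fixing (k + 1), B * ε ∈ Q) :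
    IsDenseOpen k (hereditary k Q ∪ hereditary k (hereditary (k + 1) Qᶜ)) := by
  refine ⟨fun B hB γ hγ => hB.imp (mul_mem_hereditary · hγ le_rfl)
    (mul_mem_hereditary · hγ le_rfl), fun B => ?_⟩
  obtain ⟨γ, hγ, hBγ⟩ := exists_forall_mul_mul_mem_of_isDenseOpen (n := k)
    (D := fun j => {C | j = k + 1 → C ∈ Q ∪ hereditary (k + 1) Qᶜ}) (fun j _ => by
      obtain rfl | hj := eq_or_ne j (k + 1)
      · simpa using! IsDenseOpen.union_hereditary_compl hQ
      · simpa [hj] using IsDenseOpen.univ) B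
  have hQ' : ∀ α, B * γ * α ∈ Q ∪ hereditary (k + 1) Qᶜ := fun α =>
    hBγ α (k + 1) (by omega) rfl
  have hiff : ∀ β ∈ fixing k, ∀ ε ∈ fixing (k + 1),
      (B * γ * (β * ε) ∈ Q) = (B * γ * β ∈ Q) := by
    intro β _ ε hε
    rw [← mul_assoc]
    refine propext ⟨fun h => (hQ' β).resolve_right fun h' => h' ε hε h, fun h => hQ _ h ε hε⟩
  obtain ⟨γ', hγ', P, hP⟩ := exists_forall_mul_eq_of_colouring (c := fun α => B * γ * α ∈ Q) hiff
  refine ⟨γ * γ', mul_mem hγ hγ', ?_⟩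
  simp only [mul_assoc] at hP hQ'
  by_cases h : P
  · refine Or.inl fun α hα => ?_
    simpa only [mul_assoc, hP α hα] using h
  · refine Or.inr fun α hα => ?_
    rw [mul_assoc, mul_assoc]
    exact (hQ' (γ' * α)).resolve_left (by rwa [hP α hα])

end Pigeonhole

/-! ### The Polish topology -/

section Topology

local instance : TopologicalSpace (List σ) := ⊥

local instance : DiscreteTopology (List σ) := ⟨rfl⟩

/-- The topology of pointwise convergence, for the discrete topology on `List σ`. -/
instance : TopologicalSpace (StrongEmbedding σ) := .induced DFunLike.coe inferInstance

theorem isClopen_setOf_apply_mem {Y : Type*} [TopologicalSpace Y] {h : Y → StrongEmbedding σ}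
    (hh : Continuous h) (x : List σ) (S : Set (List σ)) : IsClopen {y | h y x ∈ S} :=
  (isClopen_discrete S).preimage
    ((continuous_apply x).comp (continuous_induced_dom.comp hh))

theorem isClosed_setOf_traceEq {Y : Type*} [TopologicalSpace Y] {h : Y → StrongEmbedding σ}
    (hh : Continuous h) (k : ℕ) (τ : StrongEmbedding σ) : IsClosed {y | TraceEq k (h y) τ} := by
  simp only [TraceEq, ofPred_forall]
  exact isClosed_iInter fun x =>
    (isClopen_setOf_apply_mem hh x {z | z.take k = (τ x).take k}).isClosed

instance : ContinuousMul (StrongEmbedding σ) := by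
  refine ⟨continuous_induced_rng.2 (continuous_pi fun x => continuous_def.2 fun S _ => ?_)⟩
  have hpre : (fun p : StrongEmbedding σ × StrongEmbedding σ => (p.1 * p.2) x) ⁻¹' S =
      ⋃ y, {p | p.2 x ∈ ({y} : Set (List σ))} ∩ {p | p.1 y ∈ S} := by ext; simp
  exact hpre ▸ isOpen_iUnion fun y =>
    (isClopen_setOf_apply_mem continuous_snd x _).isOpen.inter
      (isClopen_setOf_apply_mem continuous_fst y S).isOpen

theorem isClosedEmbedding_coe :
    IsClosedEmbedding (DFunLike.coe : StrongEmbedding σ → List σ → List σ) := by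
  refine ⟨⟨⟨rfl⟩, DFunLike.coe_injective⟩, ?_⟩
  have hrange : range (DFunLike.coe : StrongEmbedding σ → List σ → List σ) =
      (⋂ (x) (y), {g | x.length = y.length → (g x).length = (g y).length}) ∩
        ⋂ (x) (i), {g | (g x ++ [i]) <+: g (x ++ [i])} := by
    ext g
    simp only [mem_range, mem_inter_iff, mem_iInter, mem_ofPred_eq]
    exact ⟨fun ⟨α, hα⟩ => hα ▸ ⟨fun _ _ => α.length_congr, α.append_singleton_prefix_apply⟩,
      fun ⟨hlen, hstep⟩ => ⟨⟨g, hlen, hstep⟩, rfl⟩⟩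
  rw [hrange]
  refine (isClosed_iInter fun x => isClosed_iInter fun y => ?_).inter
    (isClosed_iInter fun x => isClosed_iInter fun i => ?_)
  · have hcont : Continuous fun g : List σ → List σ => (g x, g y) := by fun_prop
    exact (isClosed_discrete {p : List σ × List σ | x.length = y.length →
      p.1.length = p.2.length}).preimage hcont
  · have hcont : Continuous fun g : List σ → List σ => (g x, g (x ++ [i])) := by fun_prop
    exact (isClosed_discrete {p : List σ × List σ | (p.1 ++ [i]) <+: p.2}).preimage hcont

instance [Countable σ] : PolishSpace (StrongEmbedding σ) :=
  have : PolishSpace (List σ → List σ) := {}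
  isClosedEmbedding_coe.polishSpace

instance : MeasurableSpace (StrongEmbedding σ) := borel _

instance : BorelSpace (StrongEmbedding σ) := ⟨rfl⟩

end Topology

/-! ### Analytic sets are Ramsey -/

section Ramsey

/-- The finite sequences of natural numbers with code at most `k`: an increasing exhaustion of the
countable set of all of them by finite sets. -/
def coded (k : ℕ) : Set (List ℕ) := {u | Encodable.encode u ≤ k}

theorem coded_mono {k m : ℕ} (h : k ≤ m) : coded k ⊆ coded m := fun _ hu => le_trans hu h

theorem finite_coded (k : ℕ) : (coded k).Finite :=
  (finite_Iic k).preimage Encodable.encode_injective.injOn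

theorem nil_mem_coded (k : ℕ) : [] ∈ coded k := by simp [coded]

/-- The embeddings no right translation of which by `fixing k` is separated from `Y` by a further
such translation. -/
def live (k : ℕ) (Y : Set (StrongEmbedding σ)) : Set (StrongEmbedding σ) :=
  hereditary k (hereditary k Yᶜ)ᶜ

theorem isDenseOpen_setOf_forall_coded (X : List ℕ → Set (StrongEmbedding σ)) (k : ℕ) :
    IsDenseOpen k {B | ∀ u ∈ coded k, B ∈ hereditary k (X u)ᶜ ∪ live k (X u)} :=
  IsDenseOpen.setOf_forall_mem (finite_coded k) fun _ _ =>
    IsDenseOpen.union_hereditary_compl fun _ hB _ hγ => mul_mem_hereditary hB hγ le_rfl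

/-- The embeddings at which, for a Souslin scheme `X` indexed by reversed finite sequences, some
immediate successor of `u` is live at a depth beyond `k`. -/
def branching (X : List ℕ → Set (StrongEmbedding σ)) (k : ℕ) (u : List ℕ) :
    Set (StrongEmbedding σ) :=
  {B | ∃ j > k, ∃ i, i :: u ∈ coded j ∧ B ∈ live j (X (i :: u))}

theorem exists_forall_exists_mul_mem_res {X : List ℕ → Set (StrongEmbedding σ)}
    (hX : ∀ u, X u = ⋃ i, X (i :: u)) {n : ℕ} {A : StrongEmbedding σ}
    (hA : ∀ k ≥ n, ∀ u ∈ coded k, A ∈ hereditary k (X u)ᶜ ∪ hereditary k (branching X k u))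
    (h₀ : A ∈ branching X n []) :
    ∃ w : ℕ → ℕ, ∀ t, ∃ γ ∈ fixing t, A * γ ∈ X (PiNat.res w t) := by
  have hlive : ∀ k u, A ∈ live k (X u) → ∃ γ ∈ fixing k, A * γ ∈ X u := by
    intro k u h
    simpa [hereditary] using hereditary_subset k _ h
  obtain ⟨w, hw⟩ := exists_forall_exists_res_of_forall_exists_cons
    (Q := fun k u => n ≤ k ∧ A ∈ branching X k u) (k := n) ⟨le_rfl, h₀⟩ (by
      rintro k u ⟨hk, j, hj, i, hi, hji⟩
      refine ⟨j, hj, i, by omega, ?_⟩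
      refine (hA j (by omega) _ hi).elim (fun hrej => ?_) fun h => hereditary_subset j _ h
      exact absurd hrej (hereditary_subset j _ hji))
  refine ⟨w, fun t => ?_⟩
  obtain ⟨k, hk, -, j, hj, i, -, hji⟩ := hw t
  obtain ⟨γ, hγ, hmem⟩ := hlive j _ hji
  exact ⟨γ, fixing_antitone (by omega) hγ, hX (PiNat.res w t) ▸ mem_iUnion.2 ⟨i, hmem⟩⟩

variable [Inhabited σ] [Finite σ]

theorem isDenseOpen_decided_of_forall_exists_mem_hereditary {U : Set (StrongEmbedding σ)}
    (hU : ∀ B ∈ U, ∃ j, B ∈ hereditary j U) (k : ℕ) : IsDenseOpen k (decided k U) := by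
  refine IsDenseOpen.decided_of_exists fun B => ?_
  have hU' : ∀ j, ∀ B ∈ hereditary j U, ∀ γ ∈ fixing j, B * γ ∈ hereditary j U :=
    fun j B hB γ hγ => mul_mem_hereditary hB hγ le_rfl
  let acc : ℕ → Set (StrongEmbedding σ) := fun j => hereditary j U
  let rej : ℕ → Set (StrongEmbedding σ) := fun j => hereditary j (acc j)ᶜ
  obtain ⟨γ₀, hγ₀, h₀⟩ := (IsDenseOpen.union_hereditary_compl (hU' k)).exists_mul_mem B
  obtain h₀ | h₀ := h₀
  · exact ⟨γ₀, hγ₀, Or.inl h₀⟩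
  obtain ⟨γ, hγ, hstep⟩ := exists_forall_mul_mul_mem_of_isDenseOpen (n := k)
    (fun j _ => isDenseOpen_hereditary_union_hereditary_hereditary_compl (hU' (j + 1))) (B * γ₀)
  have hrej : ∀ j ≥ k, ∀ α ∈ fixing k, B * γ₀ * γ * α ∈ rej j := by
    intro j hj
    induction j, hj using Nat.le_induction with
    | base => exact fun α hα =>
        mul_mem_hereditary (mul_mem_hereditary h₀ hγ le_rfl) hα le_rfl
    | succ j hj ih =>
      refine fun α hα => (hstep α j hj).elim (fun hacc => ?_) fun h => hereditary_subset j _ h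
      exact absurd (fun δ hδ => hereditary_subset (j + 1) U (hacc δ hδ))
        (hereditary_subset j _ (ih α hα))
  refine ⟨γ₀ * γ, mul_mem hγ₀ hγ, Or.inr fun α hα hmem => ?_⟩
  rw [← mul_assoc] at hmem
  obtain ⟨j, hj⟩ := hU _ hmem
  exact hereditary_subset _ _ (hrej (max j k) (le_max_right j k) α hα)
    fun δ hδ => hj δ (fixing_antitone (le_max_left j k) hδ)

theorem isDenseOpen_hereditary_compl_union_hereditary_branching
    {X : List ℕ → Set (StrongEmbedding σ)} (hX : ∀ u, X u = ⋃ i, X (i :: u)) (k : ℕ)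
    (u : List ℕ) :
    IsDenseOpen k (hereditary k (X u)ᶜ ∪ hereditary k (branching X k u)) := by
  refine ⟨fun B hB γ hγ => hB.imp (mul_mem_hereditary · hγ le_rfl)
    (mul_mem_hereditary · hγ le_rfl), fun B => ?_⟩
  obtain ⟨γ, hγ, hlive⟩ := exists_forall_mul_mul_mem_of_isDenseOpen (n := k)
    (fun j _ => isDenseOpen_setOf_forall_coded X j) B
  have hopen : ∀ C ∈ branching X k u, ∃ j, C ∈ hereditary j (branching X k u) := by
    rintro C ⟨j, hj, i, hi, hC⟩
    exact ⟨j, fun δ hδ => ⟨j, hj, i, hi, mul_mem_hereditary hC hδ le_rfl⟩⟩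
  obtain ⟨γ', hγ', hdec⟩ :=
    (isDenseOpen_decided_of_forall_exists_mem_hereditary hopen k).exists_mul_mem (B * γ)
  refine ⟨γ * γ', mul_mem hγ hγ', ?_⟩
  rw [← mul_assoc]
  refine hdec.symm.imp_left fun hnot δ hδ hmem => hnot δ hδ ?_
  obtain ⟨i, hi⟩ := mem_iUnion.1 (hX u ▸ hmem)
  have hcoded : i :: u ∈ coded (max (k + 1) (Encodable.encode (i :: u))) :=
    le_max_right (k + 1) _
  have hor := hlive (γ' * δ) _ (by omega) (i :: u) hcoded
  rw [← mul_assoc] at hor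
  exact ⟨_, by omega, i, hcoded, hor.resolve_left fun hrej => hereditary_subset _ _ hrej hi⟩

theorem isDenseOpen_decided_of_analyticSet {X : Set (StrongEmbedding σ)}
    (hX : AnalyticSet X) (n : ℕ) : IsDenseOpen n (decided n X) := by
  rw [AnalyticSet] at hX
  obtain rfl | ⟨h, hh, rfl⟩ := hX
  · exact IsDenseOpen.decided_of_exists fun B => ⟨1, one_mem _, Or.inr fun _ _ => id⟩
  refine IsDenseOpen.decided_of_exists fun B => ?_
  let X : List ℕ → Set (StrongEmbedding σ) := fun u => h '' {w | PiNat.res w u.length = u}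
  have hX : ∀ u, X u = ⋃ i, X (i :: u) := by
    intro u
    simp only [X, ← image_iUnion]
    congr 1
    ext w
    simp
  have hX₀ : X [] = range h := by simp [X]
  obtain ⟨γ, hγ, hγX⟩ := exists_forall_mul_mul_mem_of_isDenseOpen (n := n) (fun k _ =>
    IsDenseOpen.setOf_forall_mem (finite_coded k) fun u _ =>
      isDenseOpen_hereditary_compl_union_hereditary_branching hX k u) B
  refine ⟨γ, hγ, (hγX 1 n le_rfl [] (nil_mem_coded n)).symm.imp (fun hbr α hα => ?_) ?_⟩
  · rw [mul_one] at hbr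
    obtain ⟨w, hw⟩ := exists_forall_exists_mul_mem_res hX
      (fun k hk u hu => hγX α k hk u hu) (hbr α hα)
    refine ⟨w, ext fun x => ?_⟩
    obtain ⟨N, hN⟩ := exists_forall_res_eq_mem
      (hh.tendsto w ((isClopen_setOf_apply_mem continuous_id x {h w x}).isOpen.mem_nhds rfl))
    obtain ⟨ε, hε, w', hw', hhw'⟩ := hw (max N (x.length + 1))
    rw [mem_ofPred_eq, PiNat.res_length, PiNat.res_eq_res] at hw'
    have hx : h w' x = h w x := hN w' (PiNat.res_eq_res.2 fun i hi => hw' (by omega))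
    rw [← hx, hhw', mul_apply, hε x (by omega)]
  · rw [mul_one, hX₀]
    exact id

end Ramsey

/-! ### Moving a word off the range -/

section Nontrivial

variable [Inhabited σ] {α β : StrongEmbedding σ}

theorem mem_range_of_append_singleton_prefix {x p q : List σ} {i j : σ} (hij : i ≠ j)
    (hp : (x ++ [i]) <+: α p) (hq : (x ++ [j]) <+: α q) : x ∈ range α := by
  let p' := p ++ List.replicate q.length default
  let q' := q ++ List.replicate p.length default
  have hp' : (x ++ [i]) <+: α p' := hp.trans (α.prefix_mono (List.prefix_append _ _))
  have hq' : (x ++ [j]) <+: α q' := hq.trans (α.prefix_mono (List.prefix_append _ _))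
  have hne : p' ≠ q' := fun h => hij (eq_of_append_singleton_prefix hp' (h ▸ hq'))
  obtain ⟨c, a, b, hab, hcp, hcq⟩ :=
    exists_append_singleton_prefix_of_ne (by simp [p', q', add_comm]) hne
  have hcp := α.append_singleton_prefix hcp
  have hcq := α.append_singleton_prefix hcq
  have hx {y z : List σ} {l : σ} (h : (y ++ [l]) <+: z) : y <+: z :=
    (List.prefix_append _ _).trans h
  obtain hlt | heq | hlt := lt_trichotomy (α c).length x.length
  · exact absurd (eq_of_append_singleton_prefix
      (List.prefix_of_prefix_length_le hcp (hx hp') (by simpa using hlt))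
      (List.prefix_of_prefix_length_le hcq (hx hq') (by simpa using hlt))) hab
  · exact ⟨c, (List.prefix_of_prefix_length_le (hx hcp) (hx hp') heq.le).eq_of_length heq⟩
  · exact absurd (eq_of_append_singleton_prefix
      (List.prefix_of_prefix_length_le hp' (hx hcp) (by simpa using hlt))
      (List.prefix_of_prefix_length_le hq' (hx hcq) (by simpa using hlt))) hij

theorem range_subset_of_finite_diff [Nontrivial σ] (h : (range α \ range β).Finite) :
    range α ⊆ range β := by
  obtain ⟨m, hm⟩ := (h.image List.length).bddAbove
  have hlong : ∀ z, m < z.length → α z ∈ range β := fun z hz => by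
    by_contra hz'
    have := hm (mem_image_of_mem _ ⟨mem_range_self z, hz'⟩)
    have := α.length_le_length_apply z
    omega
  rintro _ ⟨x, rfl⟩
  obtain ⟨i, j, hij⟩ := exists_pair_ne σ
  have hlong' (l : σ) : ∃ p, (α x ++ [l]) <+: β p := by
    obtain ⟨p, hp⟩ := hlong (x ++ [l] ++ List.replicate m default) (by simp; omega)
    exact ⟨p, hp ▸ α.append_singleton_prefix (List.prefix_append _ _)⟩
  obtain ⟨p, hp⟩ := hlong' i
  obtain ⟨q, hq⟩ := hlong' j
  exact mem_range_of_append_singleton_prefix hij hp hq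

theorem infinite_diff_range_or_infinite_diff_range_of_ne [Nontrivial σ] (h : α ≠ β) :
    (range α \ range β).Infinite ∨ (range β \ range α).Infinite := by
  by_contra! hfin
  exact h (eq_of_range_eq ((range_subset_of_finite_diff hfin.1).antisymm
    (range_subset_of_finite_diff hfin.2)))

theorem exists_le_length_apply_notMem_range [Finite σ] {B : StrongEmbedding σ}
    (h : (range (B * α) \ range (B * β)).Infinite) (m : ℕ) :
    ∃ z, m ≤ (α z).length ∧ α z ∉ range β := by
  have hinj : (range α \ range β).Infinite := by
    refine Infinite.of_image B ?_
    rwa [image_sdiff B.injective, ← range_comp, ← range_comp]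
  obtain ⟨_, ⟨⟨z, rfl⟩, hz⟩, hlen⟩ := hinj.exists_notMem_finite (List.finite_length_lt σ m)
  exact ⟨z, not_lt.1 hlen, hz⟩

end Nontrivial

section InsertLetter

variable {k : ℕ} {s t : List σ → σ}

/-- The embedding fixing the levels below `k` and inserting at each word `x` of length `k` the
letter `s x`. -/
def insertLetter (k : ℕ) (s : List σ → σ) : StrongEmbedding σ :=
  graft k (fun x z => s x :: z) (by simp) (by simp)

theorem insertLetter_mem_fixing : insertLetter k s ∈ fixing k := graft_mem_fixing

theorem insertLetter_append {x : List σ} (hx : x.length = k) (z : List σ) :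
    insertLetter k s (x ++ z) = x ++ s x :: z := graft_append hx z

theorem insertLetter_mul_congr {α : StrongEmbedding σ}
    (h : ∀ x, k ≤ (α x).length → s ((α x).take k) = t ((α x).take k)) :
    insertLetter k s * α = insertLetter k t * α := by
  refine ext fun x => ?_
  obtain hx | hx := lt_or_ge (α x).length k
  · exact (insertLetter_mem_fixing _ hx).trans (insertLetter_mem_fixing _ hx).symm
  · have htake : ((α x).take k).length = k := List.length_take_of_le hx
    rw [mul_apply, mul_apply, ← List.take_append_drop k (α x), insertLetter_append htake,
      insertLetter_append htake, h x hx]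

variable [Inhabited σ]

theorem exists_insertLetter_mul_traceEq {α : StrongEmbedding σ} (hk : ∀ c, (α c).length ≠ k) :
    ∃ s, TraceEq (k + 1) (insertLetter k s * α) α := by
  have huniq : ∀ x, ∃ a, ∀ i v, x.length = k → (x ++ [i]) <+: α v → i = a := by
    intro x
    by_cases hx : ∃ a v, x.length = k ∧ (x ++ [a]) <+: α v
    · obtain ⟨a, v, hlen, hv⟩ := hx
      refine ⟨a, fun i w _ hw => by_contra fun hne => ?_⟩
      obtain ⟨c, rfl⟩ := mem_range_of_append_singleton_prefix hne hw hv
      exact hk c hlen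
    · exact ⟨default, fun i v hlen hv => absurd ⟨i, v, hlen, hv⟩ hx⟩
  choose s hs using huniq
  refine ⟨s, fun v => ?_⟩
  obtain hlt | heq | hlt := lt_trichotomy (α v).length k
  · rw [mul_apply, insertLetter_mem_fixing _ hlt]
  · exact absurd heq (hk v)
  · have hlen : ((α v).take k).length = k := List.length_take_of_le hlt.le
    have hletter : (α v)[k] = s ((α v).take k) :=
      hs _ _ v hlen (by rw [List.take_concat_get']; exact List.take_prefix _ _)
    rw [mul_apply, ← List.take_concat_get' _ _ hlt, hletter]
    nth_rw 1 [← List.take_append_drop k (α v)]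
    rw [insertLetter_append hlen, List.take_append, List.take_of_length_le (by omega), hlen]
    simp

theorem take_level_mem_range (α : StrongEmbedding σ) (n : ℕ) (x : List σ) :
    (α x).take (α.level n) ∈ range α := by
  refine ⟨x.take n, ?_⟩
  rw [← α.take_apply_take le_rfl, List.take_of_length_le (l := α (x.take n))]
  exact (length_apply α _).trans_le (α.level_strictMono.monotone (by simp))

/-- Two translations in `fixing k` moving a word `y` of length `k` off the range of `α` to different
places agree up to translations which are invisible at level `k + 1`. -/
theorem exists_apply_ne_and_forall_mul_eq [Nontrivial σ] {α : StrongEmbedding σ} {y : List σ}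
    (hlen : y.length = k) (hy : y ∉ range α) :
    ∃ γ₁ ∈ fixing k, ∀ δ ∈ fixing (k + 1), ∃ γ₂ ∈ fixing k, γ₁ y ≠ γ₂ y ∧
      ∀ β, TraceEq (k + 1) β α → ∃ β', TraceEq (k + 1) β' α ∧ γ₂ * β = γ₁ * δ * β' := by
  have hfix {δ : StrongEmbedding σ} (hδ : δ ∈ fixing (k + 1)) : δ ∈ fixing k :=
    fixing_antitone k.le_succ hδ
  by_cases hk : ∃ c, (α c).length = k
  · obtain ⟨c, hc⟩ := hk
    obtain ⟨a, b, hab⟩ := exists_pair_ne σ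
    classical
    refine ⟨insertLetter k fun _ => a, insertLetter_mem_fixing, fun δ hδ =>
      ⟨insertLetter k (fun x => if x = y then b else a) * δ,
        mul_mem insertLetter_mem_fixing (hfix hδ), ?_, fun β hβ => ⟨β, hβ, ?_⟩⟩⟩
    · rw [mul_apply, hδ y (by omega), ← y.append_nil, insertLetter_append hlen,
        insertLetter_append hlen]
      simpa using hab
    · rw [mul_assoc, mul_assoc]
      refine insertLetter_mul_congr fun x hx => if_neg fun hxy => hy ?_
      have htake : (α x).take k = y := by
        rw [← hxy, mul_apply, take_of_mem_fixing (hfix hδ), hβ.anti k.le_succ x]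
      rw [length_apply] at hc
      rw [← htake, ← hc]
      exact α.take_level_mem_range _ x
  · push Not at hk
    obtain ⟨s, hs⟩ := exists_insertLetter_mul_traceEq hk
    refine ⟨1, one_mem _, fun δ hδ => ⟨δ * insertLetter k s,
      mul_mem (hfix hδ) insertLetter_mem_fixing, fun h => ?_, fun β hβ =>
        ⟨insertLetter k s * β, ?_, by rw [one_mul, mul_assoc]⟩⟩⟩
    · have hle := δ.length_le_length_apply (insertLetter k s y)
      rw [← mul_apply, ← h, ← y.append_nil, insertLetter_append hlen] at hle
      simp at hle
    · exact ((hβ.cutHeight_mul _).anti (le_cutHeight _ _)).trans hs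

end InsertLetter

/-! ### Countable sections force equality -/

section Partners

/-- For a continuous parametrization `g` of a relation on embeddings: the `α` with trace `τ` at
height `k` for which `(A, B * α)` is the value of `g` at some sequence starting with `u`. -/
def partners (g : (ℕ → ℕ) → StrongEmbedding σ × StrongEmbedding σ) (u : List ℕ)
    (B : StrongEmbedding σ) (k : ℕ) (τ A : StrongEmbedding σ) : Set (StrongEmbedding σ) :=
  {α | TraceEq k α τ ∧ ∃ w, PiNat.res w u.length = u ∧ g w = (A, B * α)}

/-- `B` admits a pair of right translates with prescribed traces `τ` and `τ'` at height `k` which is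
the value of `g` at some sequence starting with `u`. -/
def Witnessed (g : (ℕ → ℕ) → StrongEmbedding σ × StrongEmbedding σ) (u : List ℕ)
    (B : StrongEmbedding σ) (k : ℕ) (τ τ' : StrongEmbedding σ) : Prop :=
  ∃ α, TraceEq k α τ ∧ (partners g u B k τ' (B * α)).Nonempty

variable {g : (ℕ → ℕ) → StrongEmbedding σ × StrongEmbedding σ} {u : List ℕ} {k m n : ℕ}
  {A B γ τ τ' ρ ρ' : StrongEmbedding σ}

theorem partners_subset (hmk : m ≤ k) (h : TraceEq m ρ τ) :
    partners g u B k ρ A ⊆ partners g u B m τ A :=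
  fun _ hα => ⟨(hα.1.anti hmk).trans h, hα.2⟩

theorem mul_mem_partners {α : StrongEmbedding σ} (hγ : γ ∈ fixing k)
    (hα : α ∈ partners g u (B * γ) k τ A) : γ * α ∈ partners g u B k τ A := by
  obtain ⟨hτ, w, hw, hg⟩ := hα
  exact ⟨(TraceEq.mul_left_of_mem_fixing hγ α).trans hτ, w, hw, hg.trans (by rw [mul_assoc])⟩

theorem Witnessed.anti (h : Witnessed g u B k τ τ') (hmk : m ≤ k) (hτ : TraceEq m τ ρ)
    (hτ' : TraceEq m τ' ρ') : Witnessed g u B m ρ ρ' :=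
  let ⟨α, hα, hpartner⟩ := h
  ⟨α, (hα.anti hmk).trans hτ, hpartner.mono (partners_subset hmk hτ')⟩

variable [Countable σ]

theorem analyticSet_setOf_mem_partners (hg : Continuous g) (u : List ℕ) (k : ℕ)
    (τ : StrongEmbedding σ) :
    AnalyticSet {p : StrongEmbedding σ × StrongEmbedding σ × StrongEmbedding σ |
      p.2.2 ∈ partners g u p.1 k τ p.2.1} := by
  have hclosed : IsClosed {p : (StrongEmbedding σ × StrongEmbedding σ × StrongEmbedding σ) ×
      (ℕ → ℕ) | TraceEq k p.1.2.2 τ ∧ PiNat.res p.2 u.length = u ∧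
        g p.2 = (p.1.2.1, p.1.1 * p.1.2.2)} :=
    (isClosed_setOf_traceEq (by fun_prop) k τ).inter
      (((isClosed_setOf_res_eq u).preimage continuous_snd).inter
        (isClosed_eq (by fun_prop) (by fun_prop)))
  convert hclosed.analyticSet.image_of_continuous continuous_fst using 1
  ext p
  simp [partners]

theorem analyticSet_setOf_partners_nonempty (hg : Continuous g) (u : List ℕ)
    (B : StrongEmbedding σ) (k : ℕ) (τ ρ : StrongEmbedding σ) :
    AnalyticSet {C | (partners g u B k τ (C * ρ)).Nonempty} := by
  have hcont : Continuous fun p : StrongEmbedding σ × StrongEmbedding σ =>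
    (B, p.1 * ρ, p.2) := by fun_prop
  convert ((analyticSet_setOf_mem_partners hg u k τ).preimage hcont).image_of_continuous
    continuous_fst using 1
  ext C
  simp [Set.Nonempty]

theorem analyticSet_setOf_partners_nontrivial (hg : Continuous g) (u : List ℕ)
    (B : StrongEmbedding σ) (k : ℕ) (τ ρ : StrongEmbedding σ) :
    AnalyticSet {C | (partners g u B k τ (C * ρ)).Nontrivial} := by
  have hcont₁ : Continuous fun p : StrongEmbedding σ × StrongEmbedding σ × StrongEmbedding σ =>
    (B, p.1 * ρ, p.2.1) := by fun_prop
  have hcont₂ : Continuous fun p : StrongEmbedding σ × StrongEmbedding σ × StrongEmbedding σ =>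
    (B, p.1 * ρ, p.2.2) := by fun_prop
  have hne : IsOpen {p : StrongEmbedding σ × StrongEmbedding σ × StrongEmbedding σ |
    p.2.1 ≠ p.2.2} := isOpen_ne_fun (by fun_prop) (by fun_prop)
  have hpartner := analyticSet_setOf_mem_partners hg u k τ
  convert (analyticSet_inter (analyticSet_inter (hpartner.preimage hcont₁)
    (hpartner.preimage hcont₂)) hne.measurableSet.analyticSet).image_of_continuous
      continuous_fst using 1
  ext C
  simp [Set.Nontrivial, and_assoc]

theorem analyticSet_setOf_witnessed (hg : Continuous g) (u : List ℕ) (k : ℕ)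
    (τ τ' : StrongEmbedding σ) : AnalyticSet {C | Witnessed g u C k τ τ'} := by
  have hcont : Continuous fun p : StrongEmbedding σ × StrongEmbedding σ × StrongEmbedding σ =>
    (p.1, p.1 * p.2.1, p.2.2) := by fun_prop
  have hcont' : Continuous fun p : StrongEmbedding σ × StrongEmbedding σ × StrongEmbedding σ =>
    p.2.1 := by fun_prop
  convert (analyticSet_inter (isClosed_setOf_traceEq hcont' k τ).analyticSet
    ((analyticSet_setOf_mem_partners hg u k τ').preimage hcont)).image_of_continuous
    continuous_fst using 1
  ext C
  simp [Witnessed, Set.Nonempty]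

end Partners

section Decided

/-- Every right translate of `B` decides, at each level `k ≥ n`, all the instances of `Witnessed`
for `g` with traces at height `k + 1` and sequences coded below `k`. -/
def DecidesWitnesses (g : (ℕ → ℕ) → StrongEmbedding σ × StrongEmbedding σ) (n : ℕ)
    (B : StrongEmbedding σ) : Prop :=
  ∀ α, ∀ k ≥ n, ∀ u ∈ coded k, ∀ τ τ',
    B * α ∈ decided k {C | Witnessed g u C (k + 1) τ τ'}

variable {g : (ℕ → ℕ) → StrongEmbedding σ × StrongEmbedding σ} {u : List ℕ} {k n : ℕ}
  {B α τ τ' : StrongEmbedding σ}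

namespace DecidesWitnesses

theorem mul (hB : DecidesWitnesses g n B) (γ : StrongEmbedding σ) :
    DecidesWitnesses g n (B * γ) := fun α => by
  rw [mul_assoc]; exact hB (γ * α)

theorem witnessed_mul_succ (hB : DecidesWitnesses g n B) (hk : n ≤ k) (hu : u ∈ coded k)
    (h : Witnessed g u B (k + 1) τ τ') {γ : StrongEmbedding σ} (hγ : γ ∈ fixing k) :
    Witnessed g u (B * γ) (k + 1) τ τ' := by
  have hdec := hB 1 k hk u hu τ τ'
  rw [mul_one] at hdec
  exact hdec.resolve_right (fun hnot => hereditary_subset _ _ hnot h) γ hγ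

theorem witnessed_mul (hB : DecidesWitnesses g n B) (hk : n ≤ k) (hu : u ∈ coded k)
    (h : Witnessed g u B k τ τ') {γ : StrongEmbedding σ} (hγ : γ ∈ fixing k) :
    Witnessed g u (B * γ) k τ τ' := by
  obtain ⟨α, hα, α', hα', w⟩ := h
  exact (hB.witnessed_mul_succ hk hu ⟨α, .refl _ _, α', .refl _ _, w⟩ hγ).anti k.le_succ hα hα'

variable [Inhabited σ] [Finite σ]

theorem exists_mul (hg : Continuous g) (n : ℕ) (B : StrongEmbedding σ) :
    ∃ γ ∈ fixing n, DecidesWitnesses g n (B * γ) := by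
  choose T hT hnet using exists_finite_traceEq_net (σ := σ)
  obtain ⟨γ, hγ, hdec⟩ := exists_forall_mul_mul_mem_of_isDenseOpen (n := n) (fun k _ =>
    IsDenseOpen.setOf_forall_mem ((finite_coded k).prod ((hT (k + 1)).prod (hT (k + 1))))
      fun p _ => isDenseOpen_decided_of_analyticSet
        (analyticSet_setOf_witnessed hg p.1 (k + 1) p.2.1 p.2.2) k) B
  refine ⟨γ, hγ, fun α k hk u hu τ τ' => ?_⟩
  obtain ⟨ρ, hρ, hτρ⟩ := hnet (k + 1) τ
  obtain ⟨ρ', hρ', hτρ'⟩ := hnet (k + 1) τ'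
  have heq : {C | Witnessed g u C (k + 1) τ τ'} = {C | Witnessed g u C (k + 1) ρ ρ'} :=
    Set.ext fun C => ⟨fun h => h.anti le_rfl hτρ hτρ', fun h => h.anti le_rfl hτρ.symm hτρ'.symm⟩
  exact heq ▸ hdec α k hk (u, ρ, ρ') ⟨hu, hρ, hρ'⟩

end DecidesWitnesses

variable [Inhabited σ] [Finite σ]

theorem exists_forall_partners_nonempty (hg : Continuous g) {γ : StrongEmbedding σ}
    (hγ : γ ∈ fixing k) (h : ∀ γ ∈ fixing k, Witnessed g u (B * γ) (k + 1) τ τ') :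
    ∃ δ ∈ fixing (k + 1), ∀ β, TraceEq (k + 1) β τ →
      (partners g u (B * γ) (k + 1) τ' (B * (γ * δ * β))).Nonempty := by
  obtain ⟨δ, hδ, hdec⟩ := (isDenseOpen_decided_of_analyticSet
    (analyticSet_setOf_partners_nonempty hg u (B * γ) (k + 1) τ' (saturate (k + 1) τ))
    (k + 1)).exists_mul_mem (B * γ)
  refine ⟨δ, hδ, ?_⟩
  obtain hall | hnone := hdec
  · intro β hβ
    obtain ⟨ε, hε, rfl⟩ := hβ.exists_eq_mul_saturate
    simpa only [mul_assoc, mem_ofPred_eq] using hall ε hε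
  · obtain ⟨α, hα, α', hα'⟩ := h _ (mul_mem hγ (fixing_antitone k.le_succ hδ))
    obtain ⟨ε, hε, rfl⟩ := hα.exists_eq_mul_saturate
    rw [← mul_assoc B] at hα'
    refine absurd ⟨δ * α', mul_mem_partners hδ ?_⟩ (hnone ε hε)
    simpa only [mul_assoc] using hα'

variable [Nontrivial σ]

theorem DecidesWitnesses.exists_partners_nontrivial (hg : Continuous g)
    (hinf : ∀ w, (range (g w).2 \ range (g w).1).Infinite) (hB : DecidesWitnesses g n B)
    {m : ℕ} (hm : n ≤ m) (hu : u ∈ coded m) (h : Witnessed g u B m τ τ') :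
    ∃ α, TraceEq m α τ ∧ (partners g u B m τ' (B * α)).Nontrivial := by
  obtain ⟨α₀, hα₀, α₀', hα₀', w, hw, hgw⟩ := h
  obtain ⟨z, hz, hzα₀⟩ := exists_le_length_apply_notMem_range (by simpa [hgw] using hinf w) m
  set y := α₀' z with hy
  obtain ⟨k, hk⟩ : ∃ k, y.length = k := ⟨_, rfl⟩
  have hmk : m ≤ k := hk ▸ hz
  have hwit : ∀ γ ∈ fixing k, Witnessed g u (B * γ) (k + 1) α₀ α₀' := fun γ =>
    hB.witnessed_mul_succ (hm.trans hmk) (coded_mono hmk hu)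
      ⟨α₀, .refl _ _, α₀', .refl _ _, w, hw, hgw⟩
  obtain ⟨γ₁, hγ₁, hmove⟩ := exists_apply_ne_and_forall_mul_eq hk hzα₀
  obtain ⟨δ₁, hδ₁, hpartner₁⟩ := exists_forall_partners_nonempty hg hγ₁ hwit
  obtain ⟨γ₂, hγ₂, hne, heq⟩ := hmove δ₁ hδ₁
  obtain ⟨δ₂, hδ₂, hpartner₂⟩ := exists_forall_partners_nonempty hg hγ₂ hwit
  obtain ⟨β, hβ, hβeq⟩ := heq (δ₂ * α₀) (TraceEq.mul_left_of_mem_fixing hδ₂ α₀)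
  obtain ⟨α₁, hα₁⟩ := hpartner₁ β hβ
  obtain ⟨α₂, hα₂⟩ := hpartner₂ α₀ (.refl _ _)
  rw [← hβeq, ← mul_assoc γ₂] at hα₁
  have hpartner {γ α A : StrongEmbedding σ} (hγ : γ ∈ fixing k)
      (hα : α ∈ partners g u (B * γ) (k + 1) α₀' A) : γ * α ∈ partners g u B m τ' A :=
    mul_mem_partners (fixing_antitone hmk hγ) (partners_subset (by omega) hα₀' hα)
  have hz {α : StrongEmbedding σ} (hα : TraceEq (k + 1) α α₀') : α z = y :=
    hα.symm.apply_eq (by rw [← hy]; omega)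
  refine ⟨γ₂ * δ₂ * α₀, ?_, γ₁ * α₁, hpartner hγ₁ hα₁, γ₂ * α₂, hpartner hγ₂ hα₂, fun h => hne ?_⟩
  · exact (TraceEq.mul_left_of_mem_fixing (mul_mem (fixing_antitone hmk hγ₂)
      (fixing_antitone (by omega) hδ₂)) α₀).trans hα₀
  · simpa [hz hα₁.1, hz hα₂.1] using DFunLike.congr_fun h z

theorem DecidesWitnesses.exists_mul_forall_partners_nontrivial (hg : Continuous g)
    (hinf : ∀ w, (range (g w).2 \ range (g w).1).Infinite) (hB : DecidesWitnesses g n B) {j : ℕ}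
    (hj : n ≤ j) (hu : u ∈ coded j) (γ ρ τ' : StrongEmbedding σ) :
    ∃ δ ∈ fixing j, ∀ α, TraceEq j α ρ → Witnessed g u B (γ.cutHeight j) (γ * δ * α) τ' →
      (partners g u B (γ.cutHeight j) τ' (B * (γ * δ * α))).Nontrivial := by
  have hjm := γ.le_cutHeight j
  obtain ⟨δ, hδ, hdec⟩ := (isDenseOpen_decided_of_analyticSet
    (analyticSet_setOf_partners_nontrivial hg u B (γ.cutHeight j) τ' (saturate j ρ))
    j).exists_mul_mem (B * γ)
  refine ⟨δ, hδ, fun α hα hwit => ?_⟩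
  obtain hall | hnone := hdec
  · obtain ⟨ε, hε, rfl⟩ := hα.exists_eq_mul_saturate
    simpa only [mul_assoc, mem_ofPred_eq] using hall ε hε
  · obtain ⟨γ', hγ', hfactor⟩ := exists_mul_eq_mul_mul_of_traceEq (γ := γ) (τ := α) hδ
    obtain ⟨β, hβ, hnontrivial⟩ := (hB.mul γ').exists_partners_nontrivial hg hinf (hj.trans hjm)
      (coded_mono hjm hu) (hB.witnessed_mul (hj.trans hjm) (coded_mono hjm hu) hwit hγ')
    obtain ⟨α', hα', heq⟩ := hfactor β (hβ.trans (mul_assoc γ δ α ▸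
      TraceEq.cutHeight_mul (TraceEq.mul_left_of_mem_fixing hδ α) γ))
    obtain ⟨ε, hε, rfl⟩ := (hα'.trans hα).exists_eq_mul_saturate
    refine absurd ((hnontrivial.image (mul_right_injective γ')).mono ?_) (hnone ε hε)
    rintro _ ⟨β', hβ', rfl⟩
    have hmem := mul_mem_partners hγ' hβ'
    rwa [mul_assoc B, heq, mul_assoc γ, ← mul_assoc B] at hmem

theorem DecidesWitnesses.isDenseOpen_setOf_partners_nontrivial (hg : Continuous g)
    (hinf : ∀ w, (range (g w).2 \ range (g w).1).Infinite) (hB : DecidesWitnesses g n B) {j : ℕ}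
    (hj : n ≤ j) (hu : u ∈ coded j) (m : ℕ) (ρ τ' : StrongEmbedding σ) :
    IsDenseOpen j {γ | γ.cutHeight j = m → ∀ α, TraceEq j α ρ → Witnessed g u B m (γ * α) τ' →
      (partners g u B m τ' (B * (γ * α))).Nontrivial} := by
  refine ⟨fun γ hγ δ hδ hm α hα => ?_, fun γ => ?_⟩
  · rw [cutHeight_mul_of_mem_fixing hδ] at hm
    rw [mul_assoc γ]
    exact hγ hm (δ * α) ((TraceEq.mul_left_of_mem_fixing hδ α).trans hα)
  · obtain ⟨δ, hδ, hsplit⟩ := hB.exists_mul_forall_partners_nontrivial hg hinf hj hu γ ρ τ'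
    refine ⟨δ, hδ, ?_⟩
    rintro rfl
    rwa [cutHeight_mul_of_mem_fixing hδ]

/-- Whenever the trace of a right translate of `γ` at the height just above level `j - 1` of `γ`
takes part in a witnessed pair below `B`, that translate has two partners with the same trace. -/
def SplitsWitnesses (g : (ℕ → ℕ) → StrongEmbedding σ × StrongEmbedding σ)
    (B : StrongEmbedding σ) (j : ℕ) (γ : StrongEmbedding σ) : Prop :=
  ∀ u ∈ coded j, ∀ α τ', Witnessed g u B (γ.cutHeight j) (γ * α) τ' →
    (partners g u B (γ.cutHeight j) τ' (B * (γ * α))).Nontrivial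

theorem DecidesWitnesses.isDenseOpen_setOf_splitsWitnesses (hg : Continuous g)
    (hinf : ∀ w, (range (g w).2 \ range (g w).1).Infinite) (hB : DecidesWitnesses g n B) {j : ℕ}
    (hj : n ≤ j) : IsDenseOpen j {γ | SplitsWitnesses g B j γ} := by
  refine ⟨fun γ hγ δ hδ u hu α τ' => ?_, fun γ => ?_⟩
  · rw [cutHeight_mul_of_mem_fixing hδ, mul_assoc]
    exact hγ u hu (δ * α) τ'
  obtain ⟨S, hS, hSnet⟩ := exists_finite_traceEq_net (σ := σ) j
  obtain ⟨T, hT, hTnet⟩ := exists_finite_traceEq_net (σ := σ) (γ.cutHeight j)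
  have hdense := fun p (hp : p ∈ coded j ×ˢ S ×ˢ T) =>
    hB.isDenseOpen_setOf_partners_nontrivial hg hinf hj hp.1 (γ.cutHeight j) p.2.1 p.2.2
  obtain ⟨δ, hδ, hsplit⟩ :=
    (IsDenseOpen.setOf_forall_mem ((finite_coded j).prod (hS.prod hT)) hdense).exists_mul_mem γ
  refine ⟨δ, hδ, fun u hu α τ' => ?_⟩
  obtain ⟨ρ, hρ, hαρ⟩ := hSnet α
  obtain ⟨ρ', hρ', hτρ'⟩ := hTnet τ'
  rw [cutHeight_mul_of_mem_fixing hδ]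
  intro hwit
  exact (hsplit (u, ρ, ρ') ⟨hu, hρ, hρ'⟩ (cutHeight_mul_of_mem_fixing hδ γ) α hαρ
    (hwit.anti le_rfl (.refl _ _) hτρ')).mono (partners_subset le_rfl hτρ'.symm)

end Decided

section CountableSections

variable {n : ℕ}

theorem isClosed_range_mul_left [Inhabited σ] (B : StrongEmbedding σ) :
    IsClosed (range (B * · : StrongEmbedding σ → StrongEmbedding σ)) := by
  have heq : range (B * · : StrongEmbedding σ → StrongEmbedding σ) =
      ⋂ x, {A | A x ∈ range B} := by
    ext A
    simp only [mem_range, mem_iInter, mem_ofPred_eq]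
    refine ⟨?_, fun h => ?_⟩
    · rintro ⟨α, rfl⟩ x
      exact ⟨α x, rfl⟩
    · obtain ⟨γ, rfl⟩ := exists_eq_mul_of_range_subset (range_subset_iff.2 h)
      exact ⟨γ, rfl⟩
  exact heq ▸ isClosed_iInter fun x => (isClopen_setOf_apply_mem continuous_id x _).isClosed

theorem measurableSet_setOf_mem_range [Countable σ] (z : List σ) :
    MeasurableSet {α : StrongEmbedding σ | z ∈ range α} := by
  have heq : {α : StrongEmbedding σ | z ∈ range α} = ⋃ x, {α | α x ∈ ({z} : Set (List σ))} := by
    ext α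
    simp
  exact heq ▸ .iUnion fun x => (isClopen_setOf_apply_mem continuous_id x {z}).isOpen.measurableSet

theorem measurableSet_setOf_infinite_range_diff [Countable σ] :
    MeasurableSet {p : StrongEmbedding σ × StrongEmbedding σ |
      (range p.2 \ range p.1).Infinite} := by
  have heq : {p : StrongEmbedding σ × StrongEmbedding σ | (range p.2 \ range p.1).Infinite} =
      ⋂ F : Finset (List σ), ⋃ z ∈ {z | z ∉ F},
        Prod.snd ⁻¹' {α : StrongEmbedding σ | z ∈ range α} \
          Prod.fst ⁻¹' {α : StrongEmbedding σ | z ∈ range α} := by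
    ext p
    simp only [mem_iInter, mem_iUnion]
    refine ⟨fun h F => ?_, fun h hfin => ?_⟩
    · obtain ⟨z, hz, hzF⟩ := h.exists_notMem_finset F
      exact ⟨z, hzF, hz⟩
    · obtain ⟨z, hzF, hz⟩ := h hfin.toFinset
      exact hzF (hfin.mem_toFinset.2 hz)
  exact heq ▸ .iInter fun F => .biUnion (to_countable _) fun z _ =>
    ((measurableSet_setOf_mem_range z).preimage measurable_snd).diff
      ((measurableSet_setOf_mem_range z).preimage measurable_fst)

variable [Inhabited σ] [Finite σ]

theorem ne_mk_of_forall_splitsWitnesses {g : (ℕ → ℕ) → StrongEmbedding σ × StrongEmbedding σ}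
    (hg : Continuous g) (hcount : ∀ A, {A' | ∃ w, g w = (A, A')}.Countable)
    {B γ : StrongEmbedding σ} (hsplit : ∀ j ≥ n, SplitsWitnesses g B j γ) (w : ℕ → ℕ)
    (α α' : StrongEmbedding σ) : g w ≠ (B * (γ * α), B * α') := by
  intro hw
  let K : Set (ℕ → ℕ) := {w | (g w).1 = B * (γ * α) ∧ (g w).2 ∈ range (B * ·)}
  have hK : IsClosed K := (isClosed_eq hg.fst continuous_const).inter
    ((isClosed_range_mul_left B).preimage hg.snd)
  have hcountK : ((fun w => (g w).2) '' K).Countable :=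
    (hcount (B * (γ * α))).mono (by rintro _ ⟨w, hw, rfl⟩; exact ⟨w, Prod.ext hw.1 rfl⟩)
  obtain ⟨w₀, ⟨hfst, α₀, hsnd⟩, V, hV, hconst⟩ :=
    exists_forall_inter_eq_of_countable_image hg.snd hK ⟨w, by simp [K, hw]⟩ hcountK
  obtain ⟨N, hN⟩ := exists_forall_res_eq_mem hV
  obtain ⟨α₁, ⟨-, w₁, hw₁, hg₁⟩, α₂, ⟨-, w₂, hw₂, hg₂⟩, hne⟩ :=
    hsplit (max n (Encodable.encode (PiNat.res w₀ N))) (le_max_left _ _)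
      (PiNat.res w₀ N) (le_max_right n _) α α₀
      ⟨γ * α, .refl _ _, α₀, .refl _ _, w₀, by rw [PiNat.res_length], Prod.ext hfst hsnd.symm⟩
  rw [PiNat.res_length] at hw₁ hw₂
  have heq₁ := hconst w₁ ⟨hN w₁ hw₁, by simp [K, hg₁]⟩
  have heq₂ := hconst w₂ ⟨hN w₂ hw₂, by simp [K, hg₂]⟩
  rw [hg₁] at heq₁
  rw [hg₂] at heq₂
  exact hne (mul_left_cancel (heq₁.trans heq₂.symm))

variable [Nontrivial σ] {R : Set (StrongEmbedding σ × StrongEmbedding σ)}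

theorem exists_forall_mk_notMem_of_analyticSet (hR : AnalyticSet R)
    (hinf : ∀ p ∈ R, (range p.2 \ range p.1).Infinite) (hcount : ∀ A, {A' | (A, A') ∈ R}.Countable)
    (n : ℕ) (B : StrongEmbedding σ) : ∃ γ ∈ fixing n, ∀ α α', (B * γ * α, B * γ * α') ∉ R := by
  rw [AnalyticSet] at hR
  obtain rfl | ⟨g, hg, rfl⟩ := hR
  · exact ⟨1, one_mem _, fun _ _ => notMem_empty _⟩
  rw [forall_mem_range] at hinf
  obtain ⟨γ, hγ, hdec⟩ := DecidesWitnesses.exists_mul hg n B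
  obtain ⟨δ, hδ, hsplit⟩ := exists_forall_mul_mem_of_isDenseOpen
    (fun j hj => hdec.isDenseOpen_setOf_splitsWitnesses hg hinf hj) 1
  rw [one_mul] at hsplit
  refine ⟨γ * δ, mul_mem hγ hδ, fun α α' ⟨w, hw⟩ => ?_⟩
  refine ne_mk_of_forall_splitsWitnesses (n := n) hg hcount hsplit w α (δ * α') ?_
  simpa only [mul_assoc] using hw

theorem exists_forall_mk_mem_imp_eq_of_analyticSet (hR : AnalyticSet R)
    (hcount : ∀ A, {A' | (A, A') ∈ R}.Countable) (hcount' : ∀ A', {A | (A, A') ∈ R}.Countable)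
    (n : ℕ) (B : StrongEmbedding σ) :
    ∃ γ ∈ fixing n, ∀ α α', (B * γ * α, B * γ * α') ∈ R → α = α' := by
  have hinf := (measurableSet_setOf_infinite_range_diff (σ := σ)).analyticSet
  obtain ⟨γ, hγ, hR₁⟩ := exists_forall_mk_notMem_of_analyticSet (analyticSet_inter hR hinf)
    (fun _ hp => hp.2) (fun A => (hcount A).mono fun _ h => h.1) n B
  obtain ⟨δ, hδ, hR₂⟩ := exists_forall_mk_notMem_of_analyticSet
    (analyticSet_inter (hR.preimage continuous_swap) hinf)
    (fun _ hp => hp.2) (fun A => (hcount' A).mono fun _ h => h.1) n (B * γ)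
  refine ⟨γ * δ, mul_mem hγ hδ, fun α α' hmem => by_contra fun hne => ?_⟩
  rw [← mul_assoc] at hmem
  obtain h | h := infinite_diff_range_or_infinite_diff_range_of_ne
    fun h => hne (mul_left_cancel (a := B * γ * δ) h)
  · exact hR₂ α' α ⟨hmem, h⟩
  · refine hR₁ (δ * α) (δ * α') ?_
    simp only [← mul_assoc]
    exact ⟨hmem, h⟩

end CountableSections

/-! ### Strong subtrees -/

theorem levelOf_range (α : StrongEmbedding Bool) (l : ℕ) : levelOf (range α) l = α.level l := by
  have hlevel : (fun h => ∃ a ∈ range α, a.length = h) = fun h => h ∈ range α.level := by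
    funext h
    simp only [mem_range, exists_exists_eq_and, eq_iff_iff]
    exact ⟨fun ⟨x, hx⟩ => ⟨x.length, α.length_apply x ▸ hx⟩, fun ⟨l, hl⟩ => ⟨_, hl⟩⟩
  have hinf : {h | h ∈ range α.level}.Infinite :=
    infinite_range_of_injective α.level_strictMono.injective
  rw [levelOf, hlevel]
  exact congrFun (((Nat.nth_strictMono hinf).range_inj α.level_strictMono).1
    (Nat.range_nth_of_infinite hinf)) l

theorem isStrongSubtree_range (α : StrongEmbedding Bool) : IsStrongSubtree (range α) := by
  have hlen {x : List Bool} {l : ℕ} (h : (α x).length = α.level l) : x.length = l :=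
    α.level_strictMono.injective (by rw [← length_apply, h])
  refine ⟨α.level, α.level_strictMono, ?_, ⟨α [], ⟨mem_range_self _, length_apply _ _⟩, ?_⟩, ?_, ?_⟩
  · rintro _ ⟨x, rfl⟩
    exact ⟨_, length_apply _ _⟩
  · rintro _ ⟨⟨x, rfl⟩, h⟩
    rw [List.length_eq_zero_iff.1 (hlen h)]
  · rintro l _ ⟨x, rfl⟩ hx i
    have hxi : (x ++ [i]).length = l + 1 := by simp [hlen hx]
    refine ⟨α (x ++ [i]), ⟨mem_range_self _, hxi ▸ length_apply _ _,
      α.append_singleton_prefix_apply x i⟩, ?_⟩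
    rintro _ ⟨⟨y, rfl⟩, hy, hprefix⟩
    rw [((append_singleton_prefix_iff α).1 hprefix).eq_of_length (hxi.trans (hlen hy).symm)]
  · rintro l _ ⟨y, rfl⟩ hy
    obtain rfl | ⟨x, i, rfl⟩ := y.eq_nil_or_concat'
    · simpa using hlen hy
    · have hx : x.length = l := by simpa using hlen hy
      exact ⟨α x, mem_range_self _, hx ▸ length_apply _ _, i, α.append_singleton_prefix_apply x i⟩

theorem exists_range_eq {A : Set (List Bool)} (hA : IsStrongSubtree A) :
    ∃ α : StrongEmbedding Bool, range α = A := by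
  obtain ⟨k, hk, hlevel, ⟨r, ⟨hrA, hr⟩, hroot⟩, hsucc, hpred⟩ := hA
  have hnext (a : List Bool) (i : Bool) : ∃ b, a ∈ A → b ∈ A ∧ (a ++ [i]) <+: b ∧
      ∀ l, a.length = k l → b.length = k (l + 1) := by
    by_cases ha : a ∈ A
    · obtain ⟨l, hl⟩ := hlevel a ha
      obtain ⟨b, ⟨hb, hbl, hab⟩, -⟩ := hsucc l a ha hl i
      exact ⟨b, fun _ => ⟨hb, hab, fun m hm => hk.injective (hl.symm.trans hm) ▸ hbl⟩⟩
    · exact ⟨[], fun h => absurd h ha⟩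
  choose next hnext using hnext
  have hmem (x : List Bool) : x.foldl next r ∈ A ∧ (x.foldl next r).length = k x.length := by
    induction x using List.reverseRecOn with
    | nil => exact ⟨hrA, hr⟩
    | append_singleton x i ih =>
      obtain ⟨hA, -, hlen⟩ := hnext _ i ih.1
      simpa using ⟨hA, hlen _ ih.2⟩
  have hsurj (l : ℕ) : ∀ b ∈ A, b.length = k l → ∃ x : List Bool, x.foldl next r = b := by
    induction l with
    | zero => exact fun b hb hbl => ⟨[], (hroot b ⟨hb, hbl⟩).symm⟩
    | succ l ih =>
      intro b hb hbl
      obtain ⟨a, ha, hal, i, hab⟩ := hpred l b hb hbl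
      obtain ⟨x, rfl⟩ := ih a ha hal
      obtain ⟨hA, hprefix, hlen⟩ := hnext _ i ha
      exact ⟨x ++ [i], by simpa using
        (hsucc l _ ha hal i).unique ⟨hA, hlen l hal, hprefix⟩ ⟨hb, hbl, hab⟩⟩
  refine ⟨⟨fun x => x.foldl next r, fun x y h => by rw [(hmem x).2, (hmem y).2, h],
    fun x i => by simpa using (hnext _ i (hmem x).1).2.1⟩, Subset.antisymm ?_ fun a ha => ?_⟩
  · rintro _ ⟨x, rfl⟩
    exact (hmem x).1
  · obtain ⟨l, hl⟩ := hlevel a ha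
    exact hsurj l a ha hl

theorem approxT_range (α : StrongEmbedding Bool) (n : ℕ) :
    approxT (range α) n = α '' {x | x.length < n} := by
  ext a
  simp only [approxT, levelOf_range]
  refine ⟨?_, ?_⟩
  · rintro ⟨⟨x, rfl⟩, l, hl, hx⟩
    rw [length_apply, α.level_strictMono.injective.eq_iff] at hx
    exact ⟨x, hx.trans_lt hl, rfl⟩
  · rintro ⟨x, hx, rfl⟩
    exact ⟨mem_range_self _, x.length, hx, length_apply _ _⟩

theorem approxT_range_mul {n : ℕ} (α : StrongEmbedding Bool) {γ : StrongEmbedding Bool}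
    (hγ : γ ∈ fixing n) : approxT (range (α * γ)) n = approxT (range α) n := by
  rw [approxT_range, approxT_range]
  exact image_congr fun x hx => by rw [mul_apply, hγ x hx]

/-- The strong subtree enumerated by a strong embedding of the full binary tree. -/
def toSinf (α : StrongEmbedding Bool) : Sinf := ⟨range α, α.isStrongSubtree_range⟩

theorem toSinf_injective : Function.Injective toSinf := fun _ _ h =>
  eq_of_range_eq (congrArg Subtype.val h)

theorem toSinf_surjective : Function.Surjective toSinf := fun A =>
  let ⟨α, hα⟩ := exists_range_eq A.2
  ⟨α, Subtype.ext hα⟩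

theorem measurable_toSinf : Measurable toSinf :=
  Measurable.subtype_mk (measurable_set_iff.2 fun z => measurable_to_prop (by
    simpa using! measurableSet_setOf_mem_range z))

theorem exists_forall_toSinf_imp_eq {E : Sinf → Sinf → Prop}
    (hE : MeasurableSet {p : Sinf × Sinf | E p.1 p.2}) (hcount : ∀ A, {A' | E A A'}.Countable)
    (hcount' : ∀ A', {A | E A A'}.Countable) (n : ℕ) (B : StrongEmbedding Bool) :
    ∃ γ ∈ fixing n, ∀ α α', E (B * γ * α).toSinf (B * γ * α').toSinf → α = α' :=
  exists_forall_mk_mem_imp_eq_of_analyticSet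
    (hE.preimage (measurable_toSinf.prodMap measurable_toSinf)).analyticSet
    (fun A => (hcount A.toSinf).preimage toSinf_injective)
    (fun A' => (hcount' A'.toSinf).preimage toSinf_injective) n B

end StrongEmbedding

open StrongEmbedding

theorem milliken_canonizes_CBER_to_equality_general {E : Sinf → Sinf → Prop}
    (hrefl : ∀ A, E A A) (hBorel : MeasurableSet {p : Sinf × Sinf | E p.1 p.2})
    (hcount : ∀ A, {A' | E A A'}.Countable) (hcount' : ∀ A', {A | E A A'}.Countable) :
    ∃ D : Set Sinf, RamseyConullT D ∧
      ∀ B ∈ D, ∀ A A' : Sinf, A.1 ⊆ B.1 → A'.1 ⊆ B.1 → (E A A' ↔ A = A') := by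
  refine ⟨{B | ∀ A A' : Sinf, A.1 ⊆ B.1 → A'.1 ⊆ B.1 → (E A A' ↔ A = A')}, ?_, fun B hB => hB⟩
  rintro s A ⟨B, ⟨n, rfl⟩, hBA⟩
  obtain ⟨β, rfl⟩ := toSinf_surjective B
  obtain ⟨γ, hγ, heq⟩ := exists_forall_toSinf_imp_eq hBorel hcount hcount' n β
  refine ⟨(β * γ).toSinf, ⟨⟨n, (approxT_range_mul β hγ).symm⟩,
    (range_subset_iff.2 fun x => mem_range_self (γ x)).trans hBA⟩, ?_⟩
  refine eq_empty_of_forall_notMem fun C ⟨⟨_, hC⟩, hCD⟩ => hCD fun X X' hX hX' => ?_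
  obtain ⟨α, rfl⟩ := toSinf_surjective X
  obtain ⟨α', rfl⟩ := toSinf_surjective X'
  obtain ⟨ε, rfl⟩ := exists_eq_mul_of_range_subset (hX.trans hC)
  obtain ⟨ε', rfl⟩ := exists_eq_mul_of_range_subset (hX'.trans hC)
  exact ⟨fun h => by rw [heq ε ε' h], fun h => h ▸ hrefl _⟩

/-- Theorem 7.1 (Kanovei-Sabok-Zapletal, for CBERs): every countable Borel equivalence
relation on `S_∞(2^{<ℕ})` coincides with equality below every element of some Ramsey
conull set. -/
theorem milliken_canonizes_CBER_to_equality
    (E : Sinf → Sinf → Prop) (hEquiv : Equivalence E)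
    (hBorel : MeasurableSet {p : Sinf × Sinf | E p.1 p.2})
    (hCount : ∀ A : Sinf, {A' : Sinf | E A A'}.Countable) :
    ∃ D : Set Sinf, RamseyConullT D ∧
      ∀ B ∈ D, ∀ A A' : Sinf, A.1 ⊆ B.1 → A'.1 ⊆ B.1 → (E A A' ↔ A = A') :=
  milliken_canonizes_CBER_to_equality_general hEquiv.refl hBorel hCount fun A' =>
    (hCount A').mono fun _ => hEquiv.symm
end
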